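/- arXiv:1502.03415 — 2 statements merged into one kernel-verified Lean document; each statement's English description precedes it below -/
import Mathlib

section
/- Let K ∈ ℝ^{p×n} be such that A + BK is Hurwitz. If there exists a locally Lipschitz map α₀: ℝ^n → ℝ^p, differentiable at 0 with α₀(0) = 0 and Dα₀(0) = K, such that the origin of dχ/dt = a(χ) + b(χ)α₀(χ) is globally asymptotically stable, then there exists a C² proper positive definite function V: ℝ^n → ℝ≥0 such that, with P := (1/2)·H(V)(0) (half the Hessian of V at 0): (i) P is positive definite and (A + BK)ᵀP + P(A + BK) is negative definite; and (ii) for every χ ∈ ℝ^n \ {0}, L_bV(χ) = 0 implies L_aV(χ) < 0 (Artstein condition). -/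
open Matrix Filter Topology Asymptotics

noncomputable section

/-- `V` is proper: `V χ → ∞` as `‖χ‖ → ∞`. -/
def IsProper {E : Type*} [NormedAddCommGroup E] (V : E → ℝ) : Prop :=
  Filter.Tendsto V (Bornology.cobounded E) Filter.atTop

/-- `V` is positive definite: `V 0 = 0` and `V x > 0` for `x ≠ 0`. -/
def IsPosDefFn {E : Type*} [NormedAddCommGroup E] (V : E → ℝ) : Prop :=
  V 0 = 0 ∧ ∀ x : E, x ≠ 0 → 0 < V x

/-- The Hessian matrix of `V` at `x`. -/
def hessianAt {n : ℕ} (V : (Fin n → ℝ) → ℝ) (x : Fin n → ℝ) :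
    Matrix (Fin n) (Fin n) ℝ :=
  Matrix.of fun i j => iteratedFDeriv ℝ 2 V x ![Pi.single i 1, Pi.single j 1]

/-- A real square matrix is Hurwitz if all of its (complex) eigenvalues have
negative real part. -/
def Hurwitz {ι : Type*} [Fintype ι] [DecidableEq ι] (M : Matrix ι ι ℝ) : Prop :=
  ∀ μ : ℂ, μ ∈ spectrum ℂ (M.map (algebraMap ℝ ℂ)) → μ.re < 0

/-- Global asymptotic stability of the origin for `χ' = F (χ)`:
(i) Lyapunov stability of the origin, and (ii) for every initial condition there is a
solution defined on all of `[0, ∞)` converging to the origin (for a locally Lipschitz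
vector field, by uniqueness of solutions, this is equivalent to requiring every maximal
solution to be defined on `[0,∞)` and to converge to the origin). -/
def IsGAS {E : Type*} [NormedAddCommGroup E] [NormedSpace ℝ E] (F : E → E) : Prop :=
  (∀ ε > 0, ∃ δ > 0, ∀ (χ : ℝ → E) (T : ℝ),
      (∀ t ∈ Set.Ico (0:ℝ) T, HasDerivAt χ (F (χ t)) t) →
      ‖χ 0‖ ≤ δ → ∀ t ∈ Set.Ico (0:ℝ) T, ‖χ t‖ ≤ ε) ∧
  (∀ x₀ : E, ∃ χ : ℝ → E, χ 0 = x₀ ∧ (∀ t : ℝ, 0 ≤ t → HasDerivAt χ (F (χ t)) t) ∧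
      Filter.Tendsto χ Filter.atTop (nhds 0))

/-!
By the Lyapunov equation there is a positive definite `Q` with `(A + BK)ᵀ Q + Q (A + BK)` negative
definite, so `q x = x ⬝ᵥ Q *ᵥ x` decreases along the closed loop `F` on a sublevel set `{q ≤ r}`,
minus the origin. Integrating along the solutions a cost that vanishes on `{q ≤ r / 2}` gives a
proper locally Lipschitz function `W` that vanishes there and strictly decreases along `F`
elsewhere. Mollifying `W` on the shells `{b + k ≤ W ≤ b + k + 1}` and summing yields a smooth
function `U ≥ 0`, zero near the origin, that decreases along `F` fast enough to compensate for any
growth of `q` outside `{q ≤ r}`. Then `V = q + U` decreases along `F` off the origin and has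
Hessian `2 Q` at `0`. Where `L_b V = 0`, the derivative of `V` along `F` is `L_a V`, which is the
Artstein condition.
-/

section Flow

open Metric Set NNReal

theorem exists_lipschitzOnWith_closedBall {X Y : Type*} [PseudoMetricSpace X] [ProperSpace X]
    [PseudoMetricSpace Y] {f : X → Y} (hf : LocallyLipschitz f) (c : X) (R : ℝ) :
    ∃ k, LipschitzOnWith k f (closedBall c R) :=
  hf.locallyLipschitzOn.exists_lipschitzOnWith_of_compact (isCompact_closedBall c R)

theorem eventually_forall_mem_Icc {X : Type*} {l : Filter X} {P : X × ℝ → Prop}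
    (h : ∀ᶠ p in l ×ˢ 𝓝[≥] 0, P p) : ∀ᶠ p in l ×ˢ 𝓝[>] 0, ∀ t ∈ Icc 0 p.2, P (p.1, t) := by
  obtain ⟨s, hs, I, hI, hsI⟩ := eventually_prod_iff.1 h
  obtain ⟨η, hη, hηI⟩ := (mem_nhdsGE_iff_exists_Ico_subset' (zero_lt_one' ℝ)).1 hI
  filter_upwards [prod_mem_prod hs (Ioo_mem_nhdsGT hη)] with p hp t ht
  exact hsI hp.1 (hηI ⟨ht.1, ht.2.trans_lt hp.2.2⟩)

variable {E : Type*} [NormedAddCommGroup E] [NormedSpace ℝ E] {F : E → E} {φ : E → ℝ → E}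
  {q : E → ℝ} {r : ℝ}

/-- A choice `φ x` of forward-complete solutions of the differential equation `χ' = F χ`, one for
each initial value `x`. Negative times enter only through the two-sided derivative at time `0`. -/
structure IsForwardFlow (F : E → E) (φ : E → ℝ → E) : Prop where
  map_zero (x : E) : φ x 0 = x
  hasDerivAt (x : E) {t : ℝ} (ht : 0 ≤ t) : HasDerivAt (φ x) (F (φ x t)) t

namespace IsForwardFlow

theorem continuousOn (hφ : IsForwardFlow F φ) (x : E) : ContinuousOn (φ x) (Ici 0) :=
  fun _ ht ↦ (hφ.hasDerivAt x ht).continuousAt.continuousWithinAt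

theorem exists_norm_le (hφ : IsForwardFlow F φ) (x : E) (T : ℝ) :
    ∃ R, ∀ t ∈ Icc 0 T, ‖φ x t‖ ≤ R :=
  isCompact_Icc.exists_bound_of_continuousOn ((hφ.continuousOn x).mono Icc_subset_Ici_self)

-- The bound is a fence: as long as it holds, `φ x` stays in the ball where `F` is `k`-Lipschitz,
-- and the rate `k + 1 > k` prevents `φ x t - φ y t` from crossing it.
theorem norm_sub_le_mul_exp (hφ : IsForwardFlow F φ) {k : ℝ≥0} {R T : ℝ} {x y : E}
    (hF : LipschitzOnWith k F (closedBall 0 (R + 1))) (hy : ∀ t ∈ Icc 0 T, ‖φ y t‖ ≤ R)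
    (hxy : ‖x - y‖ * Real.exp ((k + 1) * T) ≤ 1) :
    ∀ t ∈ Icc 0 T, ‖φ x t - φ y t‖ ≤ ‖x - y‖ * Real.exp ((k + 1) * t) := by
  rcases eq_or_ne x y with rfl | hne
  · simp
  have hpos : 0 < ‖x - y‖ := norm_sub_pos_iff.2 hne
  have hB (t : ℝ) : HasDerivAt (fun t ↦ ‖x - y‖ * Real.exp ((k + 1) * t))
      (‖x - y‖ * (Real.exp ((k + 1) * t) * (k + 1))) t := by
    simpa using (((hasDerivAt_id t).const_mul (k + 1 : ℝ)).exp).const_mul ‖x - y‖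
  have hsub {t : ℝ} (ht : 0 ≤ t) := (hφ.hasDerivAt x ht).sub (hφ.hasDerivAt y ht)
  refine image_norm_le_of_norm_deriv_right_lt_deriv_boundary'
    (fun t ht ↦ (hsub ht.1).continuousAt.continuousWithinAt)
    (fun t ht ↦ (hsub ht.1).hasDerivWithinAt) (by simp [hφ.map_zero])
    (fun t _ ↦ (hB t).continuousAt.continuousWithinAt) (fun t _ ↦ (hB t).hasDerivWithinAt)
    fun t ht (heq : ‖φ x t - φ y t‖ = _) ↦ ?_
  have hle_one : ‖φ x t - φ y t‖ ≤ 1 := by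
    rw [heq]
    refine le_trans ?_ hxy
    gcongr
    exact ht.2.le
  have hyR := hy t (Ico_subset_Icc_self ht)
  have hx_mem : φ x t ∈ closedBall (0 : E) (R + 1) :=
    mem_closedBall_zero_iff.2 <| by linarith [norm_le_norm_add_norm_sub' (φ x t) (φ y t)]
  have hy_mem : φ y t ∈ closedBall (0 : E) (R + 1) :=
    mem_closedBall_zero_iff.2 (by linarith)
  calc ‖F (φ x t) - F (φ y t)‖ ≤ k * ‖φ x t - φ y t‖ := hF.norm_sub_le hx_mem hy_mem
    _ < (k + 1) * (‖x - y‖ * Real.exp ((k + 1) * t)) := by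
      rw [heq]
      gcongr
      linarith
    _ = _ := by ring

theorem exists_lipschitzOnWith [ProperSpace E] (hφ : IsForwardFlow F φ) (hF : LocallyLipschitz F)
    (x₀ : E) (T : ℝ) :
    ∃ (K : ℝ≥0) (R : ℝ), ∃ s ∈ 𝓝 x₀, ∀ t ∈ Icc 0 T,
      LipschitzOnWith K (φ · t) s ∧ MapsTo (φ · t) s (closedBall 0 R) := by
  obtain ⟨R, hR⟩ := hφ.exists_norm_le x₀ T
  obtain ⟨k, hk⟩ := exists_lipschitzOnWith_closedBall hF 0 (R + 1 + 1)
  set M := Real.exp ((k + 1) * T)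
  have hM0 : 0 < M := Real.exp_pos _
  have hexp {t : ℝ} (ht : t ∈ Icc 0 T) : Real.exp ((k + 1) * t) ≤ M :=
    Real.exp_le_exp.2 (by gcongr; exact ht.2)
  have hball {x : E} (hx : x ∈ ball x₀ (1 / (2 * M))) : ‖x - x₀‖ * M ≤ 1 / 2 := by
    have := (mem_ball_iff_norm.1 hx).le
    rw [le_div_iff₀ (by positivity)] at this
    linarith
  have hbound {x : E} (hx : x ∈ ball x₀ (1 / (2 * M))) : ∀ t ∈ Icc 0 T, ‖φ x t‖ ≤ R + 1 := by
    intro t ht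
    have hdist := hφ.norm_sub_le_mul_exp (hk.mono (closedBall_subset_closedBall (by linarith)))
      hR ((hball hx).trans (by norm_num)) t ht
    have hmul : ‖x - x₀‖ * Real.exp ((k + 1) * t) ≤ ‖x - x₀‖ * M := by gcongr; exact hexp ht
    linarith [norm_le_norm_add_norm_sub' (φ x t) (φ x₀ t), hR t ht, hball hx]
  refine ⟨M.toNNReal, R + 1, ball x₀ (1 / (2 * M)), ball_mem_nhds _ (by positivity),
    fun t ht ↦ ⟨.of_dist_le_mul fun x hx y hy ↦ ?_,
      fun x hx ↦ mem_closedBall_zero_iff.2 (hbound hx t ht)⟩⟩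
  have hxy : ‖x - y‖ * M ≤ 1 := by
    have := norm_sub_le_norm_sub_add_norm_sub x x₀ y
    rw [norm_sub_rev x₀ y] at this
    linarith [mul_le_mul_of_nonneg_right this hM0.le, hball hx, hball hy]
  rw [dist_eq_norm, dist_eq_norm, Real.coe_toNNReal _ hM0.le, mul_comm]
  exact (hφ.norm_sub_le_mul_exp hk (hbound hy) hxy t ht).trans (by gcongr; exact hexp ht)

theorem continuousOn_uncurry [ProperSpace E] (hφ : IsForwardFlow F φ) (hF : LocallyLipschitz F) :
    ContinuousOn (Function.uncurry φ) (univ ×ˢ Ici 0) := by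
  rintro ⟨x₀, t₀⟩ ⟨-, ht₀⟩
  obtain ⟨K, R, s, hs, hKs⟩ := hφ.exists_lipschitzOnWith hF x₀ (t₀ + 1)
  have hcont : ContinuousOn (Function.uncurry φ) (s ×ˢ Icc 0 (t₀ + 1)) :=
    continuousOn_prod_of_continuousOn_lipschitzOnWith _ K
      (fun x _ ↦ (hφ.continuousOn x).mono Icc_subset_Ici_self) fun t ht ↦ (hKs t ht).1
  refine (hcont (x₀, t₀) ⟨mem_of_mem_nhds hs, ht₀, by simp⟩).mono_of_mem_nhdsWithin ?_
  rw [nhdsWithin_prod_eq, nhdsWithin_univ]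
  exact prod_mem_prod hs (inter_mem_nhdsWithin _ (Iic_mem_nhds (by simp)))

theorem continuous_left [ProperSpace E] (hφ : IsForwardFlow F φ) (hF : LocallyLipschitz F) {t : ℝ}
    (ht : 0 ≤ t) : Continuous (φ · t) :=
  (hφ.continuousOn_uncurry hF).comp_continuous (by fun_prop : Continuous fun x : E ↦ (x, t))
    fun _ ↦ ⟨trivial, ht⟩

theorem tendsto_uncurry_zero [ProperSpace E] (hφ : IsForwardFlow F φ) (hF : LocallyLipschitz F)
    (x₀ : E) : Tendsto (Function.uncurry φ) (𝓝 x₀ ×ˢ 𝓝[≥] 0) (𝓝 x₀) := by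
  have := hφ.continuousOn_uncurry hF (x₀, 0) ⟨trivial, self_mem_Ici⟩
  rwa [ContinuousWithinAt, nhdsWithin_prod_eq, nhdsWithin_univ, Function.uncurry_apply_pair,
    hφ.map_zero] at this

theorem map_add [ProperSpace E] (hφ : IsForwardFlow F φ) (hF : LocallyLipschitz F) (x : E)
    {s t : ℝ} (hs : 0 ≤ s) (ht : 0 ≤ t) : φ x (s + t) = φ (φ x s) t := by
  obtain ⟨R₁, hR₁⟩ := hφ.exists_norm_le (φ x s) t
  obtain ⟨R₂, hR₂⟩ := hφ.exists_norm_le x (s + t)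
  obtain ⟨k, hk⟩ := exists_lipschitzOnWith_closedBall hF 0 (max R₁ R₂)
  have hshift {u : ℝ} (hu : 0 ≤ u) : HasDerivAt (fun u ↦ φ x (s + u)) (F (φ x (s + u))) u :=
    (hφ.hasDerivAt x (add_nonneg hs hu)).comp_const_add s u
  refine ODE_solution_unique_of_mem_Icc_right (v := fun _ ↦ F)
    (s := fun _ ↦ closedBall 0 (max R₁ R₂)) (fun _ _ ↦ hk)
    (fun u hu ↦ (hshift hu.1).continuousAt.continuousWithinAt)
    (fun u hu ↦ (hshift hu.1).hasDerivWithinAt)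
    (fun u hu ↦ mem_closedBall_zero_iff.2 <|
      (hR₂ (s + u) ⟨add_nonneg hs hu.1, by linarith [hu.2]⟩).trans (le_max_right _ _))
    ((hφ.continuousOn _).mono Icc_subset_Ici_self)
    (fun u hu ↦ (hφ.hasDerivAt _ hu.1).hasDerivWithinAt)
    (fun u hu ↦ mem_closedBall_zero_iff.2 <|
      (hR₁ u (Ico_subset_Icc_self hu)).trans (le_max_left _ _))
    (by simp [hφ.map_zero]) ⟨ht, le_rfl⟩

theorem eventually_norm_sub_add_smul_le [ProperSpace E] (hφ : IsForwardFlow F φ)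
    (hF : LocallyLipschitz F) (x₀ : E) {κ : ℝ} (hκ : 0 < κ) :
    ∀ᶠ p : E × E × ℝ in 𝓝 x₀ ×ˢ 𝓝 (F x₀) ×ˢ 𝓝[>] 0,
      ‖φ p.1 p.2.2 - (p.1 + p.2.2 • p.2.1)‖ ≤ κ * p.2.2 := by
  have hclose : ∀ᶠ p : E × ℝ in 𝓝 x₀ ×ˢ 𝓝[≥] 0, ‖F (φ p.1 p.2) - F x₀‖ < κ / 2 := by
    have := (hF.continuous.tendsto x₀).comp (hφ.tendsto_uncurry_zero hF x₀)
    filter_upwards [this.eventually (ball_mem_nhds _ (half_pos hκ))] with p hp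
    exact mem_ball_iff_norm.1 hp
  have hproj : Tendsto (fun p : E × E × ℝ ↦ (p.1, p.2.2)) (𝓝 x₀ ×ˢ 𝓝 (F x₀) ×ˢ 𝓝[>] 0)
      (𝓝 x₀ ×ˢ 𝓝[>] 0) := tendsto_fst.prodMk (tendsto_snd.comp tendsto_snd)
  filter_upwards [hproj.eventually (eventually_forall_mem_Icc hclose),
    (tendsto_fst.comp tendsto_snd).eventually (ball_mem_nhds (F x₀) (half_pos hκ)),
    (tendsto_snd.comp tendsto_snd).eventually self_mem_nhdsWithin]
    with ⟨z, v, h⟩ hflow hv (hh : 0 < h)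
  have hderiv {t : ℝ} (ht : 0 ≤ t) :
      HasDerivAt (fun t ↦ φ z t - (z + t • v)) (F (φ z t) - v) t := by
    simpa using (hφ.hasDerivAt z ht).fun_sub (((hasDerivAt_id t).smul_const v).const_add z)
  have hbound (t : ℝ) (ht : t ∈ Ico 0 h) : ‖F (φ z t) - v‖ ≤ κ := by
    have h₁ := hflow t (Ico_subset_Icc_self ht)
    have h₂ : ‖F x₀ - v‖ < κ / 2 := by rwa [norm_sub_rev, ← mem_ball_iff_norm]
    linarith [norm_sub_le_norm_sub_add_norm_sub (F (φ z t)) (F x₀) v]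
  simpa [hφ.map_zero] using norm_image_sub_le_of_norm_deriv_le_segment'
    (fun t ht ↦ (hderiv ht.1).hasDerivWithinAt) hbound h ⟨hh.le, le_rfl⟩

theorem le_of_fderiv_neg_of_eq (hφ : IsForwardFlow F φ) (hq : Differentiable ℝ q)
    (hqF : ∀ x, q x = r → fderiv ℝ q x (F x) < 0) {x : E} (hx : q x ≤ r) {t : ℝ} (ht : 0 ≤ t) :
    q (φ x t) ≤ r := by
  have hderiv {s : ℝ} (hs : 0 ≤ s) :
      HasDerivAt (fun s ↦ q (φ x s)) (fderiv ℝ q (φ x s) (F (φ x s))) s :=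
    (hq (φ x s)).hasFDerivAt.comp_hasDerivAt s (hφ.hasDerivAt x hs)
  exact image_le_of_deriv_right_lt_deriv_boundary (f := fun s ↦ q (φ x s)) (B := fun _ ↦ r)
    (B' := fun _ ↦ 0) (fun s hs ↦ (hderiv hs.1).continuousAt.continuousWithinAt)
    (fun s hs ↦ (hderiv hs.1).hasDerivWithinAt) (by simpa [hφ.map_zero])
    (fun _ ↦ hasDerivAt_const _ _) (fun s _ hs ↦ hqF _ hs) ⟨ht, le_rfl⟩

theorem exists_eventually_forall_le [ProperSpace E] (hφ : IsForwardFlow F φ)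
    (hF : LocallyLipschitz F) (hlim : ∀ x, Tendsto (φ x) atTop (𝓝 0)) (hq : Differentiable ℝ q)
    (hq0 : q 0 < r) (hqF : ∀ x, q x = r → fderiv ℝ q x (F x) < 0) (x₀ : E) :
    ∃ T ≥ 0, ∀ᶠ x in 𝓝 x₀, ∀ t ≥ T, q (φ x t) ≤ r := by
  have hend : ∀ᶠ t in atTop, q (φ x₀ t) < r :=
    ((hq.continuous.tendsto 0).comp (hlim x₀)).eventually_lt_const hq0
  obtain ⟨T, hT, hT0⟩ := (hend.and (eventually_ge_atTop 0)).exists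
  refine ⟨T, hT0, ?_⟩
  have hcont := hq.continuous.comp (hφ.continuous_left hF hT0)
  filter_upwards [hcont.continuousAt.eventually_lt continuousAt_const hT] with x hx t ht
  have := hφ.le_of_fderiv_neg_of_eq hq hqF (le_of_lt hx) (sub_nonneg.2 ht)
  rwa [← hφ.map_add hF x hT0 (sub_nonneg.2 ht), add_sub_cancel] at this

end IsForwardFlow

end Flow

section StrictDecrease

variable {E : Type*} [NormedAddCommGroup E] [NormedSpace ℝ E]

/-- `W` decreases at a positive rate at `x` in the direction `v`, uniformly for base points near `x`
and directions near `v`; for locally Lipschitz `W`, equivalently, its Clarke directional derivative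
at `x` along `v` is negative. Unlike a pointwise derivative, this survives convolution with a bump
function. -/
def StrictlyDecreasingAt (W : E → ℝ) (x v : E) : Prop :=
  ∃ c > 0, ∀ᶠ p : E × E × ℝ in 𝓝 x ×ˢ 𝓝 v ×ˢ 𝓝[>] 0,
    W (p.1 + p.2.2 • p.2.1) ≤ W p.1 - c * p.2.2

theorem tendsto_add_smul_nhds (x v : E) :
    Tendsto (fun p : E × E × ℝ ↦ p.1 + p.2.2 • p.2.1) (𝓝 x ×ˢ 𝓝 v ×ˢ 𝓝[>] 0) (𝓝 x) := by
  have hcont : Continuous fun p : E × E × ℝ ↦ p.1 + p.2.2 • p.2.1 := by fun_prop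
  have := hcont.tendsto' (x, v, 0) x (by simp)
  rw [nhds_prod_eq, nhds_prod_eq] at this
  exact this.mono_left (prod_mono_right _ (prod_mono_right _ nhdsWithin_le_nhds))

theorem StrictlyDecreasingAt.congr {V W : E → ℝ} {x v : E} (hV : StrictlyDecreasingAt V x v)
    (h : V =ᶠ[𝓝 x] W) : StrictlyDecreasingAt W x v := by
  obtain ⟨c, hc, hdec⟩ := hV
  refine ⟨c, hc, ?_⟩
  filter_upwards [hdec, tendsto_fst.eventually h, (tendsto_add_smul_nhds x v).eventually h]
    with p hp h₁ h₂
  rwa [← h₁, ← h₂]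

end StrictDecrease

section CostToGo

open Set

variable {E : Type*} {φ : E → ℝ → E} {g : E → ℝ}

/-- The total cost along the solution issued from `x`, for the running cost `g`. -/
def costToGo (φ : E → ℝ → E) (g : E → ℝ) (x : E) : ℝ :=
  ∫ t in Ioi 0, g (φ x t)

theorem costToGo_eq_intervalIntegral {x : E} {T : ℝ} (hT : 0 ≤ T) (h : ∀ t ≥ T, g (φ x t) = 0) :
    costToGo φ g x = ∫ t in (0 : ℝ)..T, g (φ x t) := by
  rw [intervalIntegral.integral_of_le hT, costToGo]
  refine MeasureTheory.setIntegral_eq_of_subset_of_forall_sdiff_eq_zero measurableSet_Ioi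
    Ioc_subset_Ioi_self fun t ht ↦ h t ?_
  exact le_of_not_ge fun hle ↦ ht.2 ⟨ht.1, hle⟩

/-- `g` vanishes along every solution after some time, which is locally uniform in the initial
value; this makes `costToGo φ g` locally an integral over a fixed bounded interval. -/
def VanishesAlong [TopologicalSpace E] (φ : E → ℝ → E) (g : E → ℝ) : Prop :=
  ∀ x₀, ∃ T ≥ 0, ∀ᶠ x in 𝓝 x₀, ∀ t ≥ T, g (φ x t) = 0

variable [NormedAddCommGroup E] [NormedSpace ℝ E] {F : E → E}

namespace IsForwardFlow

theorem intervalIntegrable (hφ : IsForwardFlow F φ) (hg : Continuous g) (x : E) {s t : ℝ}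
    (hs : 0 ≤ s) (ht : 0 ≤ t) :
    IntervalIntegrable (fun u ↦ g (φ x u)) MeasureTheory.volume s t :=
  ((hg.comp_continuousOn (hφ.continuousOn x)).mono
    fun _ hu ↦ (le_min hs ht).trans hu.1).intervalIntegrable

theorem le_costToGo (hφ : IsForwardFlow F φ) (hg : Continuous g) {v : E → ℝ}
    (hv : Differentiable ℝ v) (hvg : ∀ x, -fderiv ℝ v x (F x) ≤ g x) {x : E} {T : ℝ} (hT : 0 ≤ T)
    (hgT : ∀ t ≥ T, g (φ x t) = 0) (hvT : v (φ x T) ≤ 0) : v x ≤ costToGo φ g x := by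
  have hderiv {t : ℝ} (ht : 0 ≤ t) :
      HasDerivAt (fun t ↦ -v (φ x t)) (-fderiv ℝ v (φ x t) (F (φ x t))) t :=
    ((hv _).hasFDerivAt.comp_hasDerivAt t (hφ.hasDerivAt x ht)).neg
  have := intervalIntegral.sub_le_integral_of_hasDeriv_right_of_le hT
    (fun t ht ↦ (hderiv ht.1).continuousAt.continuousWithinAt)
    (fun t ht ↦ (hderiv ht.1.le).hasDerivWithinAt)
    ((intervalIntegrable_iff_integrableOn_Icc_of_le hT).1 (hφ.intervalIntegrable hg x le_rfl hT))
    fun t _ ↦ hvg (φ x t)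
  rw [costToGo_eq_intervalIntegral hT hgT]
  simp only [hφ.map_zero] at this
  linarith

variable [ProperSpace E]

theorem costToGo_flow (hφ : IsForwardFlow F φ) (hF : LocallyLipschitz F) (hg : Continuous g)
    (hgφ : VanishesAlong φ g) (x : E) {h : ℝ} (hh : 0 ≤ h) :
    costToGo φ g (φ x h) = costToGo φ g x - ∫ t in (0 : ℝ)..h, g (φ x t) := by
  obtain ⟨T, hT, hxT⟩ := hgφ x
  have hx := hxT.self_of_nhds
  have hhT := add_nonneg hh hT
  have hflow : EqOn (fun t ↦ g (φ (φ x h) t)) (fun t ↦ g (φ x (h + t))) (Ici 0) :=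
    fun t ht ↦ congrArg g (hφ.map_add hF x hh ht).symm
  rw [costToGo_eq_intervalIntegral hT fun t ht ↦
      (hflow (hT.trans ht)).trans (hx _ (by linarith)),
    costToGo_eq_intervalIntegral hhT fun t ht ↦ hx t (by linarith),
    intervalIntegral.integral_congr (hflow.mono fun t ht ↦ (le_min le_rfl hT).trans ht.1),
    intervalIntegral.integral_comp_add_left (fun t ↦ g (φ x t)), add_zero,
    intervalIntegral.integral_interval_sub_left (hφ.intervalIntegrable hg x le_rfl hhT)
      (hφ.intervalIntegrable hg x le_rfl hh)]

theorem locallyLipschitz_costToGo (hφ : IsForwardFlow F φ) (hF : LocallyLipschitz F)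
    (hg : LocallyLipschitz g) (hgφ : VanishesAlong φ g) : LocallyLipschitz (costToGo φ g) := by
  intro x₀
  obtain ⟨T, hT, hxT⟩ := hgφ x₀
  obtain ⟨K, R, s, hs, hKs⟩ := hφ.exists_lipschitzOnWith hF x₀ T
  obtain ⟨k, hk⟩ := exists_lipschitzOnWith_closedBall hg 0 R
  refine ⟨k * K * T.toNNReal, _, inter_mem hs hxT, .of_dist_le_mul fun x hx y hy ↦ ?_⟩
  have hlip : ∀ t ∈ uIoc 0 T, ‖g (φ x t) - g (φ y t)‖ ≤ k * K * dist x y := by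
    intro t ht
    obtain ⟨hKt, hRt⟩ := hKs t (Ioc_subset_Icc_self (uIoc_of_le hT ▸ ht))
    exact (hk.comp hKt hRt).dist_le_mul x hx.1 y hy.1
  rw [costToGo_eq_intervalIntegral hT hx.2, costToGo_eq_intervalIntegral hT hy.2, dist_eq_norm,
    ← intervalIntegral.integral_sub (hφ.intervalIntegrable hg.continuous x le_rfl hT)
      (hφ.intervalIntegrable hg.continuous y le_rfl hT)]
  refine (intervalIntegral.norm_integral_le_of_norm_le_const hlip).trans_eq ?_
  rw [sub_zero, abs_of_nonneg hT, NNReal.coe_mul, NNReal.coe_mul, Real.coe_toNNReal _ hT]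
  ring

theorem strictlyDecreasingAt_costToGo (hφ : IsForwardFlow F φ) (hF : LocallyLipschitz F)
    (hg : LocallyLipschitz g) (hgφ : VanishesAlong φ g) {x : E} (hx : 0 < g x) :
    StrictlyDecreasingAt (costToGo φ g) x (F x) := by
  obtain ⟨L, s, hs, hL⟩ := hφ.locallyLipschitz_costToGo hF hg hgφ x
  obtain ⟨c, hc, hcx⟩ := exists_between hx
  obtain ⟨κ, hκ, hκc⟩ : ∃ κ > 0, L * κ ≤ c / 2 :=
    ⟨c / (2 * (L + 1)), by positivity, by rw [mul_div_assoc', div_le_div_iff₀] <;> nlinarith⟩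
  have hflow : ∀ᶠ p : E × ℝ in 𝓝 x ×ˢ 𝓝[≥] 0, φ p.1 p.2 ∈ s ∧ c < g (φ p.1 p.2) :=
    (hφ.tendsto_uncurry_zero hF x).eventually
      (Filter.Eventually.and hs (hg.continuous.continuousAt.eventually_const_lt hcx))
  have hproj : Tendsto (fun p : E × E × ℝ ↦ (p.1, p.2.2)) (𝓝 x ×ˢ 𝓝 (F x) ×ˢ 𝓝[>] 0)
      (𝓝 x ×ˢ 𝓝[>] 0) := tendsto_fst.prodMk (tendsto_snd.comp tendsto_snd)
  refine ⟨c / 2, half_pos hc, ?_⟩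
  filter_upwards [hφ.eventually_norm_sub_add_smul_le hF x hκ,
    hproj.eventually (eventually_forall_mem_Icc hflow),
    (tendsto_add_smul_nhds x (F x)).eventually hs,
    (tendsto_snd.comp tendsto_snd).eventually self_mem_nhdsWithin]
    with ⟨z, v, h⟩ hstep hflow hmem (hh : 0 < h)
  have hdist : costToGo φ g (z + h • v) ≤ costToGo φ g (φ z h) + c / 2 * h := by
    have := (le_abs_self _).trans (hL.norm_sub_le hmem (hflow h ⟨hh.le, le_rfl⟩).1)
    rw [norm_sub_rev] at this
    calc _ ≤ costToGo φ g (φ z h) + L * (κ * h) := by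
          linarith [mul_le_mul_of_nonneg_left hstep L.coe_nonneg]
      _ ≤ _ := by nlinarith
  have hint : c * h ≤ ∫ t in (0 : ℝ)..h, g (φ z t) := by
    have := intervalIntegral.integral_mono_on hh.le intervalIntegrable_const
      (hφ.intervalIntegrable hg.continuous z le_rfl hh.le) fun t ht ↦ (hflow t ht).2.le
    rwa [intervalIntegral.integral_const, smul_eq_mul, sub_zero, mul_comm] at this
  rw [hφ.costToGo_flow hF hg.continuous hgφ z hh.le] at hdist
  change costToGo φ g (z + h • v) ≤ costToGo φ g z - c / 2 * h
  linarith

end IsForwardFlow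

theorem hasDerivAt_max_zero_sq (s : ℝ) :
    HasDerivAt (fun s : ℝ ↦ max 0 s ^ 2) (2 * max 0 s) s := by
  rw [hasDerivAt_iff_isLittleO]
  refine (IsBigO.of_bound 1 (.of_forall fun t ↦ ?_)).trans_isLittleO
    (isLittleO_pow_sub_sub s one_lt_two)
  rw [one_mul, norm_pow, norm_norm, Real.norm_eq_abs, Real.norm_eq_abs, sq_abs, abs_le, smul_eq_mul]
  rcases le_total 0 s with hs | hs <;> rcases le_total 0 t with ht | ht <;>
    simp only [max_eq_left, max_eq_right, hs, ht] <;> constructor <;> nlinarith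

theorem exists_locallyLipschitz_strictlyDecreasingAt [ProperSpace E] (hφ : IsForwardFlow F φ)
    (hF : LocallyLipschitz F) (hlim : ∀ x, Tendsto (φ x) atTop (𝓝 0)) {q : E → ℝ} {r : ℝ}
    (hq : ContDiff ℝ 2 q) (hq0 : q 0 < r) (hqF : ∀ x, q x = r → fderiv ℝ q x (F x) < 0) :
    ∃ W : E → ℝ, LocallyLipschitz W ∧ (∀ x, q x ≤ r → W x = 0) ∧
      (∀ x, max 0 (q x - r) ^ 2 ≤ W x) ∧ ∀ x, r < q x → StrictlyDecreasingAt W x (F x) := by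
  have hqd : Differentiable ℝ q := hq.differentiable two_ne_zero
  have hqd' : ContDiff ℝ 1 (fderiv ℝ q) := hq.fderiv_right (by norm_num)
  set d : E → ℝ := fun x ↦ fderiv ℝ q x (F x)
  have hd : LocallyLipschitz d :=
    (isBoundedBilinearMap_apply (𝕜 := ℝ) (E := E) (F := ℝ)).contDiff.locallyLipschitz.comp
      (hqd'.locallyLipschitz.prodMk hF)
  set g : E → ℝ := fun x ↦ 2 * max 0 (q x - r) * (1 + ‖d x‖) with hg_def
  have hg : LocallyLipschitz g := by
    have hpos : LocallyLipschitz fun x ↦ max 0 (q x - r) :=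
      ((hq.of_le one_le_two).sub contDiff_const).locallyLipschitz.const_max 0
    have hmul : ContDiff ℝ 1 fun p : ℝ × ℝ ↦ 2 * p.1 * (1 + p.2) := by fun_prop
    exact hmul.locallyLipschitz.comp
      (hpos.prodMk (lipschitzWith_one_norm.locallyLipschitz.comp hd))
  have hg_zero {x : E} (hx : q x ≤ r) : g x = 0 := by simp [hg_def, hx]
  have henter := hφ.exists_eventually_forall_le hF hlim hqd hq0 hqF
  have hgφ : VanishesAlong φ g := fun x₀ ↦ by
    obtain ⟨T, hT, hx⟩ := henter x₀
    exact ⟨T, hT, hx.mono fun x hx t ht ↦ hg_zero (hx t ht)⟩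
  have hv (x : E) : HasFDerivAt (fun x ↦ max 0 (q x - r) ^ 2)
      ((2 * max 0 (q x - r)) • fderiv ℝ q x) x :=
    (hasDerivAt_max_zero_sq _).comp_hasFDerivAt x ((hqd x).hasFDerivAt.sub_const r)
  refine ⟨costToGo φ g, hφ.locallyLipschitz_costToGo hF hg hgφ, fun x hx ↦ ?_, fun x ↦ ?_,
    fun x hx ↦ hφ.strictlyDecreasingAt_costToGo hF hg hgφ ?_⟩
  · rw [costToGo_eq_intervalIntegral le_rfl fun t ht ↦
      hg_zero (hφ.le_of_fderiv_neg_of_eq hqd hqF hx ht), intervalIntegral.integral_same]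
  · obtain ⟨T, hT, hxT⟩ := henter x
    have hx := hxT.self_of_nhds
    refine hφ.le_costToGo hg.continuous (fun x ↦ (hv x).differentiableAt) (fun x ↦ ?_) hT
      (fun t ht ↦ hg_zero (hx t ht)) (by simp [hx T le_rfl])
    rw [(hv x).fderiv, _root_.smul_apply, smul_eq_mul, ← mul_neg]
    refine mul_le_mul_of_nonneg_left ?_ (by positivity)
    linarith [neg_le_abs (d x), Real.norm_eq_abs (d x)]
  · have : 0 < q x - r := sub_pos.2 hx
    positivity

end CostToGo

section Mollification

open Metric Set MeasureTheory
open scoped Convolution ContDiff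

variable {E : Type*} [NormedAddCommGroup E] [NormedSpace ℝ E]

theorem fderiv_le_of_eventually_le {f : E → ℝ} {x v : E} {c : ℝ} (hf : DifferentiableAt ℝ f x)
    (h : ∀ᶠ s in 𝓝[>] (0 : ℝ), f (x + s • v) ≤ f x - c * s) : fderiv ℝ f x v ≤ -c := by
  have hline : HasDerivAt (fun s : ℝ ↦ f (x + s • v)) (fderiv ℝ f x v) 0 :=
    hf.hasFDerivAt.hasLineDerivAt v
  refine le_of_tendsto hline.tendsto_slope_zero_right ?_
  filter_upwards [h, self_mem_nhdsWithin] with s hs (hs0 : 0 < s)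
  rw [zero_add, zero_smul, add_zero, smul_eq_mul, inv_mul_le_iff₀ hs0]
  linarith

variable [FiniteDimensional ℝ E]

section Convolution

variable [MeasurableSpace E] [BorelSpace E] (μ : Measure E) [μ.IsAddHaarMeasure] {w : E → ℝ}

theorem contDiff_normed_convolution (ψ : ContDiffBump (0 : E)) (hw : Continuous w) :
    ContDiff ℝ ∞ (ψ.normed μ ⋆[ContinuousLinearMap.lsmul ℝ ℝ, μ] w) :=
  ψ.hasCompactSupport_normed.contDiff_convolution_left _ ψ.contDiff_normed hw.locallyIntegrable

theorem normed_convolution_add_le (ψ : ContDiffBump (0 : E)) (hw : Continuous w) {x d : E} {c : ℝ}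
    (h : ∀ y ∈ ball x ψ.rOut, w (y + d) ≤ w y - c) :
    (ψ.normed μ ⋆[ContinuousLinearMap.lsmul ℝ ℝ, μ] w) (x + d) ≤
      (ψ.normed μ ⋆[ContinuousLinearMap.lsmul ℝ ℝ, μ] w) x - c := by
  have hint {u : E → ℝ} (hu : Continuous u) : Integrable (fun y ↦ ψ.normed μ y * u y) μ :=
    (ψ.continuous_normed.mul hu).integrable_of_hasCompactSupport
      ψ.hasCompactSupport_normed.mul_right
  have hmass : ∫ y, ψ.normed μ y * c ∂μ = c := by
    rw [integral_mul_const, ψ.integral_normed, one_mul]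
  simp only [convolution_def, ContinuousLinearMap.lsmul_apply, smul_eq_mul]
  calc ∫ y, ψ.normed μ y * w (x + d - y) ∂μ ≤ ∫ y, ψ.normed μ y * (w (x - y) - c) ∂μ := by
        refine integral_mono (hint (by fun_prop)) (hint (by fun_prop)) fun y ↦ ?_
        by_cases hy : y ∈ ball (0 : E) ψ.rOut
        · have hxy : x - y ∈ ball x ψ.rOut := by simpa using hy
          rw [add_sub_right_comm]
          exact mul_le_mul_of_nonneg_left (h _ hxy) (ψ.nonneg_normed y)
        · rw [← ψ.support_normed_eq (μ := μ), Function.notMem_support] at hy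
          simp only [hy, zero_mul, le_refl]
    _ = (∫ y, ψ.normed μ y * w (x - y) ∂μ) - c := by
        simp only [mul_sub]
        rw [integral_sub (hint (by fun_prop)) (hint continuous_const), hmass]

theorem eventually_fderiv_normed_convolution_neg {F : E → E} {x₀ : E} (hF : ContinuousAt F x₀)
    (hw : Continuous w) (hdec : StrictlyDecreasingAt w x₀ (F x₀)) :
    ∀ᶠ p : ℝ × E in 𝓝 (0, x₀), ∀ ψ : ContDiffBump (0 : E), ψ.rOut ≤ p.1 →
      fderiv ℝ (ψ.normed μ ⋆[ContinuousLinearMap.lsmul ℝ ℝ, μ] w) p.2 (F p.2) < 0 := by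
  obtain ⟨c, hc, hdec⟩ := hdec
  obtain ⟨P, hP, Q, hQ, hPQ⟩ := eventually_prod_iff.1 hdec
  obtain ⟨D, hD, S, hS, hDS⟩ := eventually_prod_iff.1 hQ
  obtain ⟨δ, hδ, hδP⟩ := Metric.eventually_nhds_iff_ball.1 hP
  rw [nhds_prod_eq]
  filter_upwards [prod_mem_prod (Iio_mem_nhds (half_pos hδ))
    (inter_mem (ball_mem_nhds x₀ (half_pos hδ)) (hF.eventually hD))] with p hp ψ hψ
  have hball : ∀ y ∈ ball p.2 ψ.rOut, P y := fun y hy ↦ hδP y <|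
    ball_subset_ball' (by linarith [mem_ball.1 hp.2.1, mem_Iio.1 hp.1]) hy
  have hle := fderiv_le_of_eventually_le (v := F p.2) (c := c)
    ((contDiff_normed_convolution μ ψ hw).differentiable (by simp) p.2) <| by
      filter_upwards [hS] with s hs
      exact normed_convolution_add_le μ ψ hw fun y hy ↦ hPQ (hball y hy) (hDS hp.2.2 hs)
  linarith

end Convolution

theorem exists_contDiff_abs_sub_le_fderiv_neg {F : E → E} (hF : Continuous F) {w : E → ℝ}
    (hw : UniformContinuous w) {C : Set E} (hC : IsCompact C)
    (hdec : ∀ x ∈ C, StrictlyDecreasingAt w x (F x)) {σ : ℝ} (hσ : 0 < σ) :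
    ∃ f : E → ℝ, ContDiff ℝ ∞ f ∧ (∀ x, |f x - w x| ≤ σ) ∧ ∀ x ∈ C, fderiv ℝ f x (F x) < 0 := by
  borelize E
  let μ : Measure E := Measure.addHaar
  have hneg : ∀ᶠ ρ in 𝓝 (0 : ℝ), ∀ x ∈ C, ∀ ψ : ContDiffBump (0 : E), ψ.rOut ≤ ρ →
      fderiv ℝ (ψ.normed μ ⋆[ContinuousLinearMap.lsmul ℝ ℝ, μ] w) x (F x) < 0 :=
    hC.eventually_forall_of_forall_eventually fun x hx ↦
      eventually_fderiv_normed_convolution_neg μ hF.continuousAt hw.continuous (hdec x hx)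
  obtain ⟨η, hη, hclose⟩ := Metric.uniformContinuous_iff.1 hw σ hσ
  obtain ⟨ρ, hρ, hρ0, hρη⟩ := ((hneg.filter_mono nhdsWithin_le_nhds).and
    (Ioo_mem_nhdsGT hη)).exists
  let ψ : ContDiffBump (0 : E) := ⟨ρ / 2, ρ, half_pos hρ0, half_lt_self hρ0⟩
  refine ⟨_, contDiff_normed_convolution μ ψ hw.continuous, fun x ↦ ?_,
    fun x hx ↦ hρ x hx ψ le_rfl⟩
  exact ψ.dist_normed_convolution_le hw.continuous.aestronglyMeasurable fun y hy ↦
    (hclose (lt_trans hy hρη)).le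

end Mollification

section Correction

open Metric Set Function
open scoped ContDiff

theorem exists_contDiff_nonneg_deriv_support_eq_Ioo {l u : ℝ} (hlu : l < u) :
    ∃ β : ℝ → ℝ, ContDiff ℝ ∞ β ∧ (∀ s, 0 ≤ β s) ∧ (∀ s ≤ l, β s = 0) ∧ (∀ s, 0 ≤ deriv β s) ∧
      support (deriv β) = Ioo l u := by
  let ψ : ContDiffBump ((l + u) / 2) :=
    ⟨(u - l) / 4, (u - l) / 2, by linarith, by linarith⟩
  have hsupp : support ψ = Ioo l u := by
    rw [ψ.support_eq, Real.ball_eq_Ioo]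
    congr 1 <;> ring
  have hzero {s t : ℝ} (hs : s ≤ l) (ht : t ∈ uIcc l s) : ψ t = 0 := by
    rw [uIcc_of_ge hs] at ht
    exact notMem_support.1 (hsupp ▸ fun h ↦ (h.1.trans_le ht.2).false)
  have hderiv (s : ℝ) : HasDerivAt (fun s ↦ ∫ t in l..s, ψ t) (ψ s) s :=
    (ψ.continuous.integral_hasStrictDerivAt l s).hasDerivAt
  have hderiv_eq : deriv (fun s ↦ ∫ t in l..s, ψ t) = ψ := funext fun s ↦ (hderiv s).deriv
  have hβ_zero (s : ℝ) (hs : s ≤ l) : ∫ t in l..s, ψ t = 0 := by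
    rw [intervalIntegral.integral_congr fun t ht ↦ hzero hs ht, intervalIntegral.integral_zero]
  refine ⟨fun s ↦ ∫ t in l..s, ψ t, ?_, fun s ↦ ?_, hβ_zero, fun s ↦ ?_, ?_⟩
  · rw [contDiff_infty_iff_deriv, hderiv_eq]
    exact ⟨fun s ↦ (hderiv s).differentiableAt, ψ.contDiff⟩
  · rcases le_total s l with hs | hs
    · exact (hβ_zero s hs).ge
    · exact intervalIntegral.integral_nonneg hs fun _ _ ↦ ψ.nonneg
  · rw [hderiv_eq]
    exact ψ.nonneg
  · rw [hderiv_eq, hsupp]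

variable {E : Type*} [NormedAddCommGroup E]

theorem IsProper.isCompact_le [ProperSpace E] {W : E → ℝ} (hWp : IsProper W) (hW : Continuous W)
    (d : ℝ) : IsCompact {x | W x ≤ d} := by
  refine isCompact_of_isClosed_isBounded (isClosed_le hW continuous_const) ?_
  rw [Bornology.isBounded_def]
  filter_upwards [hWp.eventually_gt_atTop d] with x hx using not_le.2 hx

theorem IsProper.uniformContinuous_min [ProperSpace E] {W : E → ℝ} (hWp : IsProper W)
    (hW : Continuous W) (d : ℝ) : UniformContinuous fun x ↦ min (W x) d := by
  refine (hW.min continuous_const).uniformContinuous_of_tendsto_cocompact (x := d) ?_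
  rw [← cobounded_eq_cocompact]
  refine tendsto_const_nhds.congr' ?_
  filter_upwards [hWp.eventually_ge_atTop d] with x hx using (min_eq_right hx).symm

variable [NormedSpace ℝ E] {F : E → E} {W h : E → ℝ} {a b c c' d d' : ℝ}

/-- A smooth nonnegative function that vanishes on `{W ≤ c}` and does not increase along `F`; adding
it to a Lyapunov candidate does not affect what happens on `{W ≤ c}`. -/
structure IsDissipativeCorrection (F : E → E) (W : E → ℝ) (c : ℝ) (U : E → ℝ) : Prop where
  contDiff : ContDiff ℝ ∞ U
  nonneg (x : E) : 0 ≤ U x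
  eq_zero_of_le {x : E} (hx : W x ≤ c) : U x = 0
  fderiv_nonpos (x : E) : fderiv ℝ U x (F x) ≤ 0

theorem IsDissipativeCorrection.differentiable {U : E → ℝ} (hU : IsDissipativeCorrection F W c U) :
    Differentiable ℝ U :=
  hU.contDiff.differentiable (by simp)

theorem IsDissipativeCorrection.tsum {U : ℕ → E → ℝ} (hW : Continuous W)
    (hU : ∀ k : ℕ, IsDissipativeCorrection F W (a + k) (U k)) :
    IsDissipativeCorrection F W a (fun x ↦ ∑' k, U k x) ∧
      ∀ x k, fderiv ℝ (fun x ↦ ∑' k, U k x) x (F x) ≤ fderiv ℝ (U k) x (F x) := by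
  have hU_zero {x : E} {k : ℕ} (hx : W x < a + k) : U k x = 0 := (hU k).eq_zero_of_le hx.le
  have hsum (x : E) (k : ℕ) : ∃ N : ℕ, k < N ∧
      (fun y ↦ ∑' k, U k y) =ᶠ[𝓝 x] fun y ↦ ∑ k ∈ Finset.range N, U k y := by
    obtain ⟨N, hN⟩ := exists_nat_gt (W x - a)
    refine ⟨max N (k + 1), by simp, ?_⟩
    filter_upwards [hW.continuousAt.eventually_lt_const (show W x < a + N by linarith)] with y hy
    refine tsum_eq_sum fun j hj ↦ hU_zero (hy.trans_le ?_)
    gcongr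
    exact (le_max_left N _).trans (not_lt.1 (Finset.mem_range.not.1 hj))
  have hderiv (x : E) (k : ℕ) :
      fderiv ℝ (fun y ↦ ∑' k, U k y) x (F x) ≤ fderiv ℝ (U k) x (F x) := by
    obtain ⟨N, hkN, heq⟩ := hsum x k
    rw [heq.fderiv_eq, fderiv_fun_sum fun k _ ↦ (hU k).differentiable x, _root_.sum_apply,
      ← Finset.add_sum_erase _ _ (Finset.mem_range.2 hkN)]
    exact add_le_of_nonpos_right (Finset.sum_nonpos fun j _ ↦ (hU j).fderiv_nonpos x)
  refine ⟨⟨?_, fun x ↦ tsum_nonneg fun k ↦ (hU k).nonneg x, fun {x} hx ↦ ?_,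
    fun x ↦ (hderiv x 0).trans ((hU 0).fderiv_nonpos x)⟩, hderiv⟩
  · refine contDiff_iff_contDiffAt.2 fun x ↦ ?_
    obtain ⟨N, -, heq⟩ := hsum x 0
    exact (ContDiffAt.sum fun k _ ↦ (hU k).contDiff.contDiffAt).congr_of_eventuallyEq heq
  · simp [fun k ↦ (hU k).eq_zero_of_le (hx.trans (le_add_of_nonneg_right k.cast_nonneg))]

variable [FiniteDimensional ℝ E]

-- `U = β ∘ f`, where `f` is within `σ` of `min W d` and `β' > 0` exactly on `(c + σ, d - 2 * σ)`:
-- where `f` takes values in this interval it approximates `W` itself and decreases along `F`.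
theorem exists_isDissipativeCorrection_fderiv_neg (hF : Continuous F) (hW : Continuous W)
    (hWp : IsProper W) (hdec : ∀ x, c ≤ W x → StrictlyDecreasingAt W x (F x)) (hc : c < c')
    (hd : d' < d) (hcd : c' ≤ d') :
    ∃ U, IsDissipativeCorrection F W c U ∧
      ∀ x, c' ≤ W x → W x ≤ d' → fderiv ℝ U x (F x) < 0 := by
  obtain ⟨σ, hσ, hσc, hσd⟩ : ∃ σ > 0, 4 * σ ≤ c' - c ∧ 4 * σ ≤ d - d' :=
    ⟨min (c' - c) (d - d') / 4, by simp [hc, hd], by linarith [min_le_left (c' - c) (d - d')],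
      by linarith [min_le_right (c' - c) (d - d')]⟩
  have hcompact : IsCompact {x | c ≤ W x ∧ W x ≤ d - σ} :=
    (hWp.isCompact_le hW _).inter_left (isClosed_le continuous_const hW)
  obtain ⟨f, hf, hfW, hfF⟩ := exists_contDiff_abs_sub_le_fderiv_neg hF
    (hWp.uniformContinuous_min hW d) hcompact (fun x hx ↦ (hdec x hx.1).congr <| by
      filter_upwards [hW.continuousAt.eventually_lt_const (show W x < d by linarith [hx.2])]
        with y hy using (min_eq_left hy.le).symm) hσ
  obtain ⟨β, hβ, hβ0, hβ_zero, hβ', hβ_supp⟩ :=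
    exists_contDiff_nonneg_deriv_support_eq_Ioo (show c + σ < d - 2 * σ by linarith)
  have hderiv (x : E) : fderiv ℝ (β ∘ f) x (F x) = deriv β (f x) * fderiv ℝ f x (F x) := by
    rw [((hβ.differentiable (by simp) _).hasDerivAt.comp_hasFDerivAt x
      (hf.differentiable (by simp) x).hasFDerivAt).fderiv, _root_.smul_apply, smul_eq_mul]
  have hneg (x : E) (hx : f x ∈ Ioo (c + σ) (d - 2 * σ)) : fderiv ℝ f x (F x) < 0 := by
    have := abs_le.1 (hfW x)
    have hmin : min (W x) d = W x := min_eq_left_iff.2 <| le_of_not_ge fun h ↦ by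
      rw [min_eq_right h] at this
      linarith [hx.2]
    rw [hmin] at this
    exact hfF x ⟨by linarith [hx.1], by linarith [hx.2]⟩
  refine ⟨β ∘ f, ⟨hβ.comp hf, fun x ↦ hβ0 _, fun {x} hx ↦ hβ_zero _ ?_, fun x ↦ ?_⟩,
    fun x hcx hxd ↦ ?_⟩
  · linarith [(abs_le.1 (hfW x)).2, min_le_left (W x) d]
  · rw [hderiv]
    by_cases hx : f x ∈ Ioo (c + σ) (d - 2 * σ)
    · exact mul_nonpos_of_nonneg_of_nonpos (hβ' _) (hneg x hx).le
    · rw [← hβ_supp, notMem_support] at hx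
      rw [hx, zero_mul]
  · have := abs_le.1 (hfW x)
    rw [min_eq_left (by linarith)] at this
    have hx : f x ∈ Ioo (c + σ) (d - 2 * σ) := ⟨by linarith, by linarith⟩
    rw [hderiv]
    exact mul_neg_of_pos_of_neg ((hβ' _).lt_of_ne' (mem_support.1 (hβ_supp ▸ hx))) (hneg x hx)

theorem exists_isDissipativeCorrection_fderiv_le (hF : Continuous F) (hW : Continuous W)
    (hWp : IsProper W) (hdec : ∀ x, c ≤ W x → StrictlyDecreasingAt W x (F x)) (hc : c < c')
    (hd : d' < d) (hcd : c' ≤ d') (hh : Continuous h) :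
    ∃ U, IsDissipativeCorrection F W c U ∧
      ∀ x, c' ≤ W x → W x ≤ d' → fderiv ℝ U x (F x) ≤ -h x := by
  obtain ⟨U, hU, hneg⟩ := exists_isDissipativeCorrection_fderiv_neg hF hW hWp hdec hc hd hcd
  have hUF : Continuous fun x ↦ fderiv ℝ U x (F x) :=
    (hU.contDiff.continuous_fderiv (by simp)).clm_apply hF
  have hcompact : IsCompact {x | c' ≤ W x ∧ W x ≤ d'} :=
    (hWp.isCompact_le hW d').inter_left (isClosed_le continuous_const hW)
  obtain ⟨M, hM⟩ := hcompact.exists_bound_of_continuousOn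
    (hh.continuousOn.div hUF.continuousOn fun x hx ↦ (hneg x hx.1 hx.2).ne)
  have hderiv (x : E) : fderiv ℝ (fun x ↦ |M| * U x) x (F x) = |M| * fderiv ℝ U x (F x) := by
    rw [fderiv_const_mul (hU.differentiable x), _root_.smul_apply, smul_eq_mul]
  refine ⟨fun x ↦ |M| * U x, ⟨contDiff_const.mul hU.contDiff,
    fun x ↦ mul_nonneg (abs_nonneg M) (hU.nonneg x), fun hx ↦ by rw [hU.eq_zero_of_le hx, mul_zero],
    fun x ↦ ?_⟩, fun x hcx hxd ↦ ?_⟩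
  · rw [hderiv]
    exact mul_nonpos_of_nonneg_of_nonpos (abs_nonneg M) (hU.fderiv_nonpos x)
  · have hx := hneg x hcx hxd
    have hratio : -|M| ≤ h x / fderiv ℝ U x (F x) :=
      (abs_le.1 ((hM x ⟨hcx, hxd⟩).trans (le_abs_self M))).1
    rw [le_div_iff_of_neg hx] at hratio
    rw [hderiv]
    linarith

theorem exists_isDissipativeCorrection_fderiv_le_of_le (hF : Continuous F) (hW : Continuous W)
    (hWp : IsProper W) (hdec : ∀ x, a ≤ W x → StrictlyDecreasingAt W x (F x)) (hab : a < b)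
    (hh : Continuous h) :
    ∃ U, IsDissipativeCorrection F W a U ∧ ∀ x, b ≤ W x → fderiv ℝ U x (F x) ≤ -h x := by
  have hshell (k : ℕ) : ∃ U, IsDissipativeCorrection F W (a + k) U ∧
      ∀ x, b + k ≤ W x → W x ≤ b + k + 1 → fderiv ℝ U x (F x) ≤ -h x :=
    exists_isDissipativeCorrection_fderiv_le hF hW hWp
      (fun x hx ↦ hdec x (by linarith [k.cast_nonneg (α := ℝ)])) (by linarith)
      (lt_add_one (b + k + 1)) (by linarith) hh
  choose U hU hUh using hshell
  obtain ⟨hsum, hsum_le⟩ := IsDissipativeCorrection.tsum hW hU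
  refine ⟨_, hsum, fun x hx ↦ (hsum_le x ⌊W x - b⌋₊).trans (hUh _ x ?_ ?_)⟩
  · linarith [Nat.floor_le (sub_nonneg.2 hx)]
  · linarith [Nat.lt_floor_add_one (W x - b)]

end Correction

section ConverseLyapunov

open scoped ContDiff

variable {E : Type*} [NormedAddCommGroup E] [NormedSpace ℝ E] [FiniteDimensional ℝ E]
  {F : E → E} {φ : E → ℝ → E} {q : E → ℝ} {r : ℝ}

theorem IsForwardFlow.exists_contDiff_add_fderiv_neg (hφ : IsForwardFlow F φ)
    (hF : LocallyLipschitz F) (hlim : ∀ x, Tendsto (φ x) atTop (𝓝 0)) (hq : ContDiff ℝ 2 q)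
    (hq0 : q 0 = 0) (hqp : IsProper q) (hr : 0 < r)
    (hqF : ∀ x ≠ 0, q x ≤ r → fderiv ℝ q x (F x) < 0) :
    ∃ U : E → ℝ, ContDiff ℝ ∞ U ∧ (∀ x, 0 ≤ U x) ∧ U =ᶠ[𝓝 0] 0 ∧
      ∀ x ≠ 0, fderiv ℝ (fun y ↦ q y + U y) x (F x) < 0 := by
  have : ProperSpace E := FiniteDimensional.proper ℝ E
  have hq_half (x : E) (hx : q x = r / 2) : fderiv ℝ q x (F x) < 0 :=
    hqF x (by rintro rfl; linarith) (by linarith)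
  obtain ⟨W, hW, hW_zero, hW_ge, hW_dec⟩ := exists_locallyLipschitz_strictlyDecreasingAt
    hφ hF hlim hq (hq0.trans_lt (half_pos hr)) hq_half
  have hWp : IsProper W := by
    refine tendsto_atTop_mono hW_ge ((tendsto_pow_atTop two_ne_zero).comp ?_)
    exact tendsto_atTop_mono (fun x ↦ le_max_right 0 (q x - r / 2))
      (tendsto_atTop_add_const_right _ _ hqp)
  have hqW {x : E} (hx : 0 < W x) : r / 2 < q x := not_le.1 fun h ↦ hx.ne' (hW_zero x h)
  have hqF_cont : Continuous fun x ↦ fderiv ℝ q x (F x) + 1 :=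
    ((hq.continuous_fderiv two_ne_zero).clm_apply hF.continuous).add continuous_const
  have ha : 0 < r ^ 2 / 8 := by positivity
  obtain ⟨U, hU, hUF⟩ := exists_isDissipativeCorrection_fderiv_le_of_le hF.continuous hW.continuous
    hWp (fun x hx ↦ hW_dec x (hqW (ha.trans_le hx)))
    (show r ^ 2 / 8 < (r / 2) ^ 2 by linarith) hqF_cont
  refine ⟨U, hU.contDiff, hU.nonneg, ?_, fun x hx ↦ ?_⟩
  · have hW0 : W 0 < r ^ 2 / 8 := by rwa [hW_zero 0 (by linarith)]
    filter_upwards [hW.continuous.continuousAt.eventually_lt_const hW0] with x hx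
      using hU.eq_zero_of_le hx.le
  · rw [fderiv_fun_add (hq.differentiable two_ne_zero x) (hU.differentiable x), _root_.add_apply]
    rcases le_or_gt (q x) r with hqr | hqr
    · exact add_neg_of_neg_of_nonpos (hqF x hx hqr) (hU.fderiv_nonpos x)
    · have hx_mem : (r / 2) ^ 2 ≤ W x :=
        (pow_le_pow_left₀ (half_pos hr).le (le_max_of_le_right (by linarith)) 2).trans (hW_ge x)
      linarith [hUF x hx_mem]

end ConverseLyapunov

section LyapunovEquation

theorem exists_pos_forall_norm_one_add_mul_lt_one {s : Set ℂ} (hs : s.Finite)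
    (hre : ∀ z ∈ s, z.re < 0) : ∃ ε : ℝ, 0 < ε ∧ ∀ z ∈ s, ‖1 + ε * z‖ < 1 := by
  suffices h : ∀ᶠ ε : ℝ in 𝓝[>] 0, ∀ z ∈ s, ‖1 + ε * z‖ < 1 by
    obtain ⟨ε, hε, hε0⟩ := (h.and self_mem_nhdsWithin).exists
    exact ⟨ε, hε0, hε⟩
  refine (eventually_all_finite hs).2 fun z hz ↦ ?_
  have hlim : Tendsto (fun ε : ℝ ↦ ε * ‖z‖ ^ 2) (𝓝[>] 0) (𝓝 0) :=
    ((continuous_mul_const _).tendsto' 0 0 (zero_mul _)).mono_left nhdsWithin_le_nhds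
  filter_upwards [hlim.eventually_lt_const (show 0 < -(2 * z.re) by linarith [hre z hz]),
    self_mem_nhdsWithin] with ε hε (hε0 : 0 < ε)
  have hnorm : ‖1 + ε * z‖ ^ 2 = 1 + ε * (2 * z.re + ε * ‖z‖ ^ 2) := by
    simp only [Complex.sq_norm, Complex.normSq_apply, Complex.add_re, Complex.add_im,
      Complex.one_re, Complex.one_im, Complex.re_ofReal_mul, Complex.im_ofReal_mul]
    ring
  rw [← sq_lt_one_iff₀ (norm_nonneg _), hnorm]
  linarith [mul_neg_of_pos_of_neg hε0 (show 2 * z.re + ε * ‖z‖ ^ 2 < 0 by linarith)]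

theorem exists_mem_spectrum_eq_one_add_mul {𝕜 A : Type*} [Field 𝕜] [Ring A] [Algebra 𝕜 A] {a : A}
    {ε z : 𝕜} (hε : ε ≠ 0) (hz : z ∈ spectrum 𝕜 (1 + ε • a)) :
    ∃ w ∈ spectrum 𝕜 a, z = 1 + ε * w := by
  rw [← map_one (algebraMap 𝕜 A), ← spectrum.singleton_add_eq, ← Units.val_mk0 hε,
    ← Units.smul_def, spectrum.unit_smul_eq_smul] at hz
  obtain ⟨_, rfl, _, ⟨w, hw, rfl⟩, rfl⟩ := hz
  exact ⟨w, hw, rfl⟩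

theorem eventually_norm_pow_lt_one {A : Type*} [NormedRing A] [NormedAlgebra ℂ A] [CompleteSpace A]
    {a : A} (ha : ∀ z ∈ spectrum ℂ a, ‖z‖ < 1) : ∀ᶠ N in atTop, ‖a ^ N‖ < 1 := by
  rcases subsingleton_or_nontrivial A with _ | _
  · exact .of_forall fun N ↦ by simp [Subsingleton.elim (a ^ N) 0]
  have hradius : spectralRadius ℂ a < (1 : NNReal) :=
    spectrum.spectralRadius_lt_of_forall_lt a fun z hz ↦ by exact_mod_cast ha z hz
  have hlim := spectrum.pow_nnnorm_pow_one_div_tendsto_nhds_spectralRadius a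
  filter_upwards [hlim.eventually_lt_const hradius, eventually_gt_atTop 0] with N hN hN0
  by_contra! h
  refine hN.not_ge (ENNReal.one_le_rpow ?_ (by positivity))
  exact_mod_cast h

variable {ι : Type*} [Fintype ι] [DecidableEq ι] {M S T : Matrix ι ι ℝ}

section Frobenius

open scoped Matrix.Norms.Frobenius

theorem norm_toLp_mulVec_le_frobenius (x : ι → ℝ) :
    ‖WithLp.toLp 2 (T *ᵥ x)‖ ≤ ‖T‖ * ‖WithLp.toLp 2 x‖ := by
  rw [← frobenius_norm_replicateCol (ι := Unit), ← frobenius_norm_replicateCol (ι := Unit),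
    replicateCol_mulVec]
  exact frobenius_norm_mul T _

theorem posDef_one_sub_transpose_mul_self (hT : ‖T‖ < 1) : (1 - Tᵀ * T).PosDef := by
  refine .of_dotProduct_mulVec_pos ?_ fun x hx ↦ ?_
  · rw [← conjTranspose_eq_transpose_of_trivial]
    exact isHermitian_one.sub (isHermitian_conjTranspose_mul_self T)
  · have hnorm (y : ι → ℝ) : y ⬝ᵥ y = ‖WithLp.toLp 2 y‖ ^ 2 := by
      rw [EuclideanSpace.real_norm_sq_eq]
      simp only [dotProduct, sq]
    have hx' : 0 < ‖WithLp.toLp 2 x‖ := by simpa using hx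
    have hTx : ‖WithLp.toLp 2 (T *ᵥ x)‖ < ‖WithLp.toLp 2 x‖ :=
      (norm_toLp_mulVec_le_frobenius x).trans_lt (mul_lt_of_lt_one_left hx' hT)
    rw [star_trivial, sub_mulVec, one_mulVec, dotProduct_sub, ← mulVec_mulVec, dotProduct_mulVec,
      vecMul_transpose, hnorm, hnorm, sub_pos]
    gcongr

theorem exists_posDef_sub_transpose_mul_mul
    (hS : ∀ z ∈ spectrum ℂ (S.map (algebraMap ℝ ℂ)), ‖z‖ < 1) :
    ∃ Q : Matrix ι ι ℝ, Q.PosDef ∧ (Q - Sᵀ * Q * S).PosDef := by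
  obtain ⟨N, hN⟩ := (eventually_norm_pow_lt_one hS).exists
  have hSN : (1 - (S ^ N)ᵀ * S ^ N).PosDef := by
    refine posDef_one_sub_transpose_mul_self ?_
    rwa [← frobenius_norm_map_eq (S ^ N) (algebraMap ℝ ℂ) (by simp), Matrix.map_pow]
  set Q := ∑ k ∈ Finset.range N, (S ^ k)ᵀ * S ^ k with hQ
  have htelescope : Q - Sᵀ * Q * S = 1 - (S ^ N)ᵀ * S ^ N := by
    have hstep (k : ℕ) : Sᵀ * ((S ^ k)ᵀ * S ^ k) * S = (S ^ (k + 1))ᵀ * S ^ (k + 1) := by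
      simp only [pow_succ, transpose_mul, Matrix.mul_assoc]
    simp only [hQ, Matrix.mul_sum, Matrix.sum_mul, hstep, ← Finset.sum_sub_distrib]
    rw [Finset.sum_range_sub' fun k ↦ (S ^ k)ᵀ * S ^ k, pow_zero, transpose_one, one_mul]
  have hQ_nonneg : Q.PosSemidef :=
    posSemidef_sum _ fun k _ ↦ posSemidef_conjTranspose_mul_self (S ^ k)
  rw [← htelescope] at hSN
  refine ⟨Q, ?_, hSN⟩
  simpa only [conjTranspose_eq_transpose_of_trivial, sub_add_cancel] using
    hSN.add_posSemidef (hQ_nonneg.conjTranspose_mul_mul_same S)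

end Frobenius

-- For small `ε > 0` the spectrum of the Euler step `1 + ε • M` lies in the open unit disc.
theorem Hurwitz.exists_posDef (hM : Hurwitz M) :
    ∃ Q : Matrix ι ι ℝ, Q.PosDef ∧ (-(Mᵀ * Q + Q * M)).PosDef := by
  obtain ⟨ε, hε, hεM⟩ := exists_pos_forall_norm_one_add_mul_lt_one (finite_spectrum _) hM
  have hmap : (1 + ε • M).map (algebraMap ℝ ℂ) = 1 + (ε : ℂ) • M.map (algebraMap ℝ ℂ) := by
    rw [Matrix.map_add _ (map_add _), Matrix.map_one _ (map_zero _) (map_one _)]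
    ext
    simp
  obtain ⟨Q, hQ, hQS⟩ := exists_posDef_sub_transpose_mul_mul (S := 1 + ε • M) fun z hz ↦ by
    rw [hmap] at hz
    obtain ⟨w, hw, rfl⟩ := exists_mem_spectrum_eq_one_add_mul (by exact_mod_cast hε.ne') hz
    exact hεM w hw
  have hexpand : -(Mᵀ * Q + Q * M) =
      ε⁻¹ • (Q - (1 + ε • M)ᵀ * Q * (1 + ε • M)) + ε • (Mᵀ * Q * M) := by
    simp only [transpose_add, transpose_one, transpose_smul, add_mul, mul_add, one_mul, mul_one,
      Matrix.smul_mul, Matrix.mul_smul, smul_add, smul_sub, smul_smul, inv_mul_cancel₀ hε.ne',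
      inv_mul_cancel_left₀ hε.ne', one_smul]
    abel
  refine ⟨Q, hQ, hexpand ▸ (hQS.smul (inv_pos.2 hε)).add_posSemidef ?_⟩
  exact (hQ.posSemidef.conjTranspose_mul_mul_same M).smul hε.le

end LyapunovEquation

section QuadraticForm

open Metric
open scoped ContDiff

variable {E : Type*} [NormedAddCommGroup E] [NormedSpace ℝ E] {B : E →L[ℝ] E →L[ℝ] ℝ}

theorem isCoercive_of_forall_pos [FiniteDimensional ℝ E] (hB : ∀ x ≠ 0, 0 < B x x) :
    IsCoercive B := by
  obtain ⟨c, hc, hcB⟩ : ∃ c > 0, ∀ x ∈ sphere (0 : E) 1, c ≤ B x x := by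
    refine (isCompact_sphere (0 : E) 1).exists_forall_le' (by fun_prop) fun x hx ↦ hB x ?_
    exact ne_of_mem_sphere hx one_ne_zero
  refine ⟨c, hc, fun x ↦ ?_⟩
  rcases eq_or_ne x 0 with rfl | hx
  · simp
  have hx' : 0 < ‖x‖ := norm_pos_iff.2 hx
  have hunit := hcB (‖x‖⁻¹ • x) (by simp [norm_smul, hx'.ne'])
  rwa [map_smul, map_smul, _root_.smul_apply, smul_eq_mul, smul_eq_mul, ← mul_assoc,
    ← mul_inv, inv_mul_eq_div, le_div_iff₀ (by positivity), ← mul_assoc] at hunit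

theorem isProper_apply_self (hB : IsCoercive B) : IsProper fun x ↦ B x x := by
  obtain ⟨c, hc, hcB⟩ := hB
  refine tendsto_atTop_mono hcB ?_
  exact (tendsto_norm_cobounded_atTop.const_mul_atTop hc).atTop_mul_atTop₀
    tendsto_norm_cobounded_atTop

theorem hasFDerivAt_apply_self (B : E →L[ℝ] E →L[ℝ] ℝ) (x : E) :
    HasFDerivAt (fun y ↦ B y y) ((B + B.flip) x) x :=
  (B.hasFDerivAt_of_bilinear (hasFDerivAt_id x) (hasFDerivAt_id x)).congr_fderiv <| by
    ext
    simp

theorem exists_forall_apply_self_le (hB : IsCoercive B) {p : E → Prop}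
    (hp : ∀ᶠ x in 𝓝[≠] 0, p x) : ∃ r > 0, ∀ x ≠ 0, B x x ≤ r → p x := by
  obtain ⟨c, hc, hcB⟩ := hB
  obtain ⟨δ, hδ, hδp⟩ := Metric.eventually_nhds_iff.1 (eventually_nhdsWithin_iff.1 hp)
  refine ⟨c * δ ^ 2 / 2, by positivity, fun x hx hxr ↦ hδp ?_ hx⟩
  rw [dist_zero_right]
  refine lt_of_pow_lt_pow_left₀ 2 hδ.le (lt_of_mul_lt_mul_left ?_ hc.le)
  calc c * ‖x‖ ^ 2 = c * ‖x‖ * ‖x‖ := by ring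
    _ ≤ c * δ ^ 2 / 2 := (hcB x).trans hxr
    _ < c * δ ^ 2 := half_lt_self (by positivity)

theorem eventually_apply_neg_of_hasFDerivAt [FiniteDimensional ℝ E] {F : E → E} {D : E →L[ℝ] E}
    (hF0 : F 0 = 0) (hFD : HasFDerivAt F D 0) (hBD : ∀ x ≠ 0, B x (D x) < 0) :
    ∀ᶠ x in 𝓝[≠] 0, B x (F x) < 0 := by
  obtain ⟨c, hc, hcB⟩ := isCoercive_of_forall_pos
    (B := -B.bilinearComp (.id ℝ E) D) fun x hx ↦ neg_pos.2 (hBD x hx)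
  have hremainder : (fun x ↦ B x (F x - D x)) =o[𝓝 0] fun x ↦ ‖x‖ * ‖x‖ := by
    refine (B.isBoundedBilinearMap.isBigO_comp).trans_isLittleO ?_
    refine (isBigO_refl _ _).mul_isLittleO ?_
    simpa [hF0] using hFD.isLittleO.norm_norm
  rw [eventually_nhdsWithin_iff]
  filter_upwards [hremainder.def (half_pos hc)] with x hx hx0
  have hx' : 0 < ‖x‖ := norm_pos_iff.2 hx0
  have hlinear : c * ‖x‖ * ‖x‖ ≤ -B x (D x) := hcB x
  have hle := (Real.le_norm_self _).trans hx
  rw [map_sub, norm_mul, norm_norm] at hle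
  linarith [mul_pos hc (mul_pos hx' hx')]

theorem exists_contDiff_lyapunov_eventuallyEq [FiniteDimensional ℝ E] {F : E → E}
    {φ : E → ℝ → E} {D : E →L[ℝ] E} (hφ : IsForwardFlow F φ) (hF : LocallyLipschitz F)
    (hlim : ∀ x, Tendsto (φ x) atTop (𝓝 0)) (hF0 : F 0 = 0) (hFD : HasFDerivAt F D 0)
    (hB : ∀ x ≠ 0, 0 < B x x) (hBD : ∀ x ≠ 0, (B + B.flip) x (D x) < 0) :
    ∃ V : E → ℝ, ContDiff ℝ ∞ V ∧ (∀ x, B x x ≤ V x) ∧ (V =ᶠ[𝓝 0] fun x ↦ B x x) ∧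
      ∀ x ≠ 0, fderiv ℝ V x (F x) < 0 := by
  have hcoercive := isCoercive_of_forall_pos hB
  have hsmooth : ContDiff ℝ ∞ fun x ↦ B x x :=
    B.isBoundedBilinearMap.contDiff.comp (contDiff_id.prodMk contDiff_id)
  obtain ⟨r, hr, hrF⟩ := exists_forall_apply_self_le hcoercive
    (eventually_apply_neg_of_hasFDerivAt hF0 hFD hBD)
  obtain ⟨U, hU, hU_nonneg, hU_zero, hUF⟩ := hφ.exists_contDiff_add_fderiv_neg hF hlim
    (contDiff_infty.1 hsmooth 2) (by simp) (isProper_apply_self hcoercive) hr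
    fun x hx hxr ↦ by
      rw [(hasFDerivAt_apply_self B x).fderiv]
      exact hrF x hx hxr
  refine ⟨fun x ↦ B x x + U x, hsmooth.add hU, fun x ↦ le_add_of_nonneg_right (hU_nonneg x), ?_,
    hUF⟩
  filter_upwards [hU_zero] with x hx using by simp [hx]

end QuadraticForm

section Hessian

variable {ι : Type*} [Fintype ι] [DecidableEq ι]

/-- The bilinear form `(x, y) ↦ x ⬝ᵥ Q *ᵥ y` as a continuous bilinear map. -/
def toBilinCLM (Q : Matrix ι ι ℝ) : (ι → ℝ) →L[ℝ] (ι → ℝ) →L[ℝ] ℝ :=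
  (toBilin' Q).toContinuousBilinearMap

theorem toBilinCLM_apply (Q : Matrix ι ι ℝ) (x y : ι → ℝ) :
    toBilinCLM Q x y = x ⬝ᵥ Q *ᵥ y :=
  toBilin'_apply' Q x y

theorem toBilinCLM_add_flip_apply_mulVec (Q M : Matrix ι ι ℝ) (x : ι → ℝ) :
    (toBilinCLM Q + (toBilinCLM Q).flip) x (M *ᵥ x) = x ⬝ᵥ (Mᵀ * Q + Q * M) *ᵥ x := by
  rw [_root_.add_apply, _root_.add_apply, ContinuousLinearMap.flip_apply, toBilinCLM_apply,
    toBilinCLM_apply, add_mulVec, dotProduct_add, ← mulVec_mulVec, ← mulVec_mulVec,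
    dotProduct_mulVec x Mᵀ, vecMul_transpose, add_comm]

theorem hessianAt_toBilinCLM {n : ℕ} (Q : Matrix (Fin n) (Fin n) ℝ) (x : Fin n → ℝ) :
    hessianAt (fun y ↦ toBilinCLM Q y y) x = Q + Qᵀ := by
  have hfderiv : fderiv ℝ (fun y ↦ toBilinCLM Q y y) = ⇑(toBilinCLM Q + (toBilinCLM Q).flip) :=
    funext fun y ↦ (hasFDerivAt_apply_self (toBilinCLM Q) y).fderiv
  ext i j
  rw [hessianAt, of_apply, iteratedFDeriv_two_apply, hfderiv, ContinuousLinearMap.fderiv]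
  simp [toBilinCLM_apply]

theorem hessianAt_congr {n : ℕ} {V V' : (Fin n → ℝ) → ℝ} {x : Fin n → ℝ} (h : V =ᶠ[𝓝 x] V') :
    hessianAt V x = hessianAt V' x := by
  rw [hessianAt, hessianAt, (h.iteratedFDeriv ℝ 2).self_of_nhds]

end Hessian

section ClosedLoop

open scoped ContDiff

theorem hasFDerivAt_clm_apply_of_eq_zero {E G H : Type*} [NormedAddCommGroup E] [NormedSpace ℝ E]
    [NormedAddCommGroup G] [NormedSpace ℝ G] [NormedAddCommGroup H] [NormedSpace ℝ H]
    {c : E → G →L[ℝ] H} {u : E → G} {u' : E →L[ℝ] G} {x : E} (hc : ContinuousAt c x)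
    (hu : HasFDerivAt u u' x) (hux : u x = 0) :
    HasFDerivAt (fun y ↦ c y (u y)) ((c x).comp u') x := by
  have hincrement : (fun y ↦ (c y - c x) (u y)) =o[𝓝 x] fun y ↦ y - x := by
    have hc' : (fun y ↦ c y - c x) =o[𝓝 x] fun _ ↦ (1 : ℝ) :=
      (isLittleO_one_iff ℝ).2 (tendsto_sub_nhds_zero_iff.2 hc)
    have hu' : u =O[𝓝 x] fun y ↦ y - x := by simpa [hux] using hu.isBigO_sub
    refine (isBoundedBilinearMap_apply.isBigO_comp (g := fun y ↦ c y - c x)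
      (h := u)).trans_isLittleO ?_
    simpa using hc'.norm_left.mul_isBigO hu'.norm_norm
  refine .of_isLittleO (((c x).hasFDerivAt.comp x hu).isLittleO.add hincrement |>.congr_left ?_)
  intro y
  simp [hux]

variable {n κ : Type*} [Fintype κ]

theorem fderiv_mulVec_eq_zero {V : (n → ℝ) → ℝ} {x : n → ℝ} {m : n → κ → ℝ}
    (hm : ∀ i, fderiv ℝ V x (fun k ↦ m k i) = 0) (v : κ → ℝ) :
    fderiv ℝ V x (of m *ᵥ v) = 0 := by
  have hsum : of m *ᵥ v = ∑ i, v i • fun k ↦ m k i := by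
    simp only [mulVec_eq_sum, op_smul_eq_smul]
    rfl
  rw [hsum, map_sum]
  exact Finset.sum_eq_zero fun i _ ↦ by rw [map_smul, hm i, smul_zero]

variable [Fintype n]

/-- Matrix-vector multiplication as a continuous bilinear map, the matrix being given as a function
of two indices because `Matrix n κ ℝ` carries no canonical norm. -/
def mulVecCLM : (n → κ → ℝ) →L[ℝ] (κ → ℝ) →L[ℝ] n → ℝ :=
  LinearMap.toContinuousBilinearMap ((mulVecBilin ℝ ℝ).comp (ofLinearEquiv ℝ).toLinearMap)

theorem mulVecCLM_apply (m : n → κ → ℝ) (v : κ → ℝ) : mulVecCLM m v = of m *ᵥ v := rfl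

theorem locallyLipschitz_add_mulVec {X : Type*} [PseudoEMetricSpace X] {a : X → n → ℝ}
    {b : X → n → κ → ℝ} {α : X → κ → ℝ} (ha : LocallyLipschitz a) (hb : LocallyLipschitz b)
    (hα : LocallyLipschitz α) : LocallyLipschitz fun x ↦ a x + of (b x) *ᵥ α x := by
  have hsmooth : ContDiff ℝ 1 fun z : (n → ℝ) × (n → κ → ℝ) × (κ → ℝ) ↦
      z.1 + mulVecCLM z.2.1 z.2.2 := by
    fun_prop
  exact hsmooth.locallyLipschitz.comp (ha.prodMk (hb.prodMk hα))

theorem hasFDerivAt_add_mulVec {a : (n → ℝ) → n → ℝ} {b : (n → ℝ) → n → κ → ℝ}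
    {α : (n → ℝ) → κ → ℝ} {A : Matrix n n ℝ} {K : Matrix κ n ℝ} {x : n → ℝ}
    (ha : HasFDerivAt a A.mulVecLin.toContinuousLinearMap x) (hb : ContinuousAt b x)
    (hα : HasFDerivAt α K.mulVecLin.toContinuousLinearMap x) (hαx : α x = 0) :
    HasFDerivAt (fun y ↦ a y + of (b y) *ᵥ α y)
      (A + of (b x) * K).mulVecLin.toContinuousLinearMap x := by
  refine (ha.add (hasFDerivAt_clm_apply_of_eq_zero
    (mulVecCLM.continuous.continuousAt.comp hb) hα hαx)).congr_fderiv ?_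
  ext v : 1
  simp [mulVecCLM_apply]

end ClosedLoop

section Main

open scoped ContDiff

theorem Hurwitz.exists_contDiff_lyapunov {n : ℕ} {F : (Fin n → ℝ) → Fin n → ℝ}
    {M : Matrix (Fin n) (Fin n) ℝ} (hM : Hurwitz M) (hF : LocallyLipschitz F) (hF0 : F 0 = 0)
    (hFM : HasFDerivAt F M.mulVecLin.toContinuousLinearMap 0)
    (hattr : ∀ x₀, ∃ χ : ℝ → Fin n → ℝ, χ 0 = x₀ ∧ (∀ t, 0 ≤ t → HasDerivAt χ (F (χ t)) t) ∧
      Tendsto χ atTop (𝓝 0)) :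
    ∃ V : (Fin n → ℝ) → ℝ, ContDiff ℝ ∞ V ∧ (∀ x, 0 ≤ V x) ∧ IsProper V ∧ IsPosDefFn V ∧
      (((1 : ℝ) / 2) • hessianAt V 0).PosDef ∧
      (-(Mᵀ * (((1 : ℝ) / 2) • hessianAt V 0) + (((1 : ℝ) / 2) • hessianAt V 0) * M)).PosDef ∧
      ∀ x ≠ 0, fderiv ℝ V x (F x) < 0 := by
  choose φ hφ0 hφ hlim using hattr
  obtain ⟨Q, hQ, hQM⟩ := hM.exists_posDef
  have hQsymm : Qᵀ = Q := by
    simpa only [conjTranspose_eq_transpose_of_trivial] using hQ.isHermitian.eq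
  have hB (x : Fin n → ℝ) (hx : x ≠ 0) : 0 < toBilinCLM Q x x := by
    simpa [toBilinCLM_apply] using hQ.dotProduct_mulVec_pos hx
  have hBM (x : Fin n → ℝ) (hx : x ≠ 0) :
      (toBilinCLM Q + (toBilinCLM Q).flip) x (M *ᵥ x) < 0 := by
    have hneg := hQM.dotProduct_mulVec_pos hx
    rwa [star_trivial, neg_mulVec, dotProduct_neg, neg_pos,
      ← toBilinCLM_add_flip_apply_mulVec] at hneg
  obtain ⟨V, hV, hBV, hV_eq, hVF⟩ :=
    exists_contDiff_lyapunov_eventuallyEq ⟨hφ0, hφ⟩ hF hlim hF0 hFM hB hBM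
  have hhessian : ((1 : ℝ) / 2) • hessianAt V 0 = Q := by
    rw [hessianAt_congr hV_eq, hessianAt_toBilinCLM, hQsymm, ← two_smul ℝ Q, smul_smul]
    norm_num
  have hV0 : V 0 = 0 := hV_eq.self_of_nhds.trans (by simp)
  have hV_pos (x : Fin n → ℝ) (hx : x ≠ 0) : 0 < V x := (hB x hx).trans_le (hBV x)
  refine ⟨V, hV, fun x ↦ ?_, tendsto_atTop_mono hBV (isProper_apply_self
    (isCoercive_of_forall_pos hB)), ⟨hV0, hV_pos⟩, hhessian ▸ hQ, hhessian ▸ hQM, hVF⟩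
  rcases eq_or_ne x 0 with rfl | hx
  exacts [hV0.ge, (hV_pos x hx).le]

theorem stmt0_general {n : ℕ} {κ : Type*} [Fintype κ]
    (a : (Fin n → ℝ) → (Fin n → ℝ)) (b : (Fin n → ℝ) → Fin n → κ → ℝ)
    (A : Matrix (Fin n) (Fin n) ℝ) (B : Matrix (Fin n) κ ℝ) (K : Matrix κ (Fin n) ℝ)
    (ha : LocallyLipschitz a) (ha0 : a 0 = 0)
    (hA : HasFDerivAt a A.mulVecLin.toContinuousLinearMap 0)
    (hb : LocallyLipschitz b) (hB : B = of (b 0)) (hHurwitz : Hurwitz (A + B * K))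
    (α₀ : (Fin n → ℝ) → κ → ℝ) (hα_lip : LocallyLipschitz α₀) (hα0 : α₀ 0 = 0)
    (hαK : HasFDerivAt α₀ K.mulVecLin.toContinuousLinearMap 0)
    (hattr : ∀ x₀, ∃ χ : ℝ → Fin n → ℝ, χ 0 = x₀ ∧
      (∀ t, 0 ≤ t → HasDerivAt χ (a (χ t) + of (b (χ t)) *ᵥ α₀ (χ t)) t) ∧
      Tendsto χ atTop (𝓝 0)) :
    ∃ V : (Fin n → ℝ) → ℝ, ContDiff ℝ ∞ V ∧ (∀ χ, 0 ≤ V χ) ∧ IsProper V ∧ IsPosDefFn V ∧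
      (((1 : ℝ) / 2) • hessianAt V 0).PosDef ∧
      (-((A + B * K)ᵀ * (((1 : ℝ) / 2) • hessianAt V 0)
          + (((1 : ℝ) / 2) • hessianAt V 0) * (A + B * K))).PosDef ∧
      ∀ χ ≠ 0, (∀ i, fderiv ℝ V χ (fun k ↦ b χ k i) = 0) → fderiv ℝ V χ (a χ) < 0 := by
  subst hB
  obtain ⟨V, hV, hV_nonneg, hV_proper, hV_posDef, hP, hLyap, hVF⟩ :=
    hHurwitz.exists_contDiff_lyapunov (locallyLipschitz_add_mulVec ha hb hα_lip)
      (by simp [ha0, hα0]) (hasFDerivAt_add_mulVec hA hb.continuous.continuousAt hαK hα0) hattr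
  refine ⟨V, hV, hV_nonneg, hV_proper, hV_posDef, hP, hLyap, fun χ hχ hbV ↦ ?_⟩
  simpa [fderiv_mulVec_eq_zero hbV] using hVF χ hχ

end Main

/-- If a locally Lipschitz feedback `α₀`, differentiable at `0` with
`α₀ 0 = 0` and `Dα₀(0) = K` (where `A + BK` is Hurwitz), globally asymptotically
stabilizes the origin of `χ' = a χ + b χ · α₀ χ`, then there is a `C²` proper positive
definite function `V` such that, with `P := ½ H(V)(0)`, `P` is positive definite,
`(A+BK)ᵀP + P(A+BK)` is negative definite, and the Artstein condition holds. -/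
theorem stmt0 {n p : ℕ}
    (a : (Fin n → ℝ) → (Fin n → ℝ)) (b : (Fin n → ℝ) → Fin n → Fin p → ℝ)
    (A : Matrix (Fin n) (Fin n) ℝ) (B : Matrix (Fin n) (Fin p) ℝ)
    (K : Matrix (Fin p) (Fin n) ℝ)
    (ha : ContDiff ℝ 1 a) (ha0 : a 0 = 0)
    (hA : ∀ v, fderiv ℝ a 0 v = A.mulVec v)
    (hb : ContDiff ℝ 1 b) (hB : B = Matrix.of (b 0))
    (hHurwitz : Hurwitz (A + B * K))
    (α₀ : (Fin n → ℝ) → (Fin p → ℝ))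
    (hα_lip : LocallyLipschitz α₀) (hα_diff : DifferentiableAt ℝ α₀ 0)
    (hα0 : α₀ 0 = 0) (hαK : ∀ v, fderiv ℝ α₀ 0 v = K.mulVec v)
    (hGAS : IsGAS fun χ => a χ + (Matrix.of (b χ)).mulVec (α₀ χ)) :
    ∃ V : (Fin n → ℝ) → ℝ, ContDiff ℝ 2 V ∧ (∀ χ, 0 ≤ V χ) ∧ IsProper V ∧ IsPosDefFn V ∧
      (((1:ℝ)/2) • hessianAt V 0).PosDef ∧
      (-((A + B * K)ᵀ * (((1:ℝ)/2) • hessianAt V 0)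
          + (((1:ℝ)/2) • hessianAt V 0) * (A + B * K))).PosDef ∧
      (∀ χ : Fin n → ℝ, χ ≠ 0 →
        (∀ i, fderiv ℝ V χ (fun k => b χ k i) = 0) → fderiv ℝ V χ (a χ) < 0) := by
  obtain ⟨V, hV, hV'⟩ := stmt0_general a b A B K ha.locallyLipschitz ha0
    ((ha.differentiable one_ne_zero 0).hasFDerivAt.congr_fderiv (ContinuousLinearMap.ext hA))
    hb.locallyLipschitz hB hHurwitz α₀ hα_lip hα0
    (hα_diff.hasFDerivAt.congr_fderiv (ContinuousLinearMap.ext hαK)) hGAS.2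
  exact ⟨V, contDiff_infty.1 hV 2, hV'⟩
end
end

section
/- (Local optimality and global inverse optimality.) Let R ∈ ℝ^{p×p} and Q ∈ ℝ^{n×n} be positive definite matrices. Assume there exists a C² proper positive definite function V: ℝ^n → ℝ≥0 such that, with P := (1/2)·H(V)(0): (i) P is positive definite and satisfies the algebraic Riccati equation PA + AᵀP − PBR⁻¹BᵀP + Q = 0; and (ii) for every χ ∈ ℝ^n \ {0}, L_bV(χ) = 0 implies L_aV(χ) < 0. Then there exist a continuous function q: ℝ^n → ℝ≥0 with q(χ) > 0 for all χ ≠ 0, and a continuous function r: ℝ^n → ℝ^{p×p} whose values are symmetric positive definite matrices, such that: (a) q(χ) = χᵀQχ + o(|χ|²) as χ → 0 (in particular q is twice differentiable at 0 with (1/2)·H(q)(0) = Q) and r(0) = R; and (b) V satisfies the Hamilton–Jacobi–Bellman equation q(χ) + L_aV(χ) − (1/4)·L_bV(χ) r(χ)⁻¹ L_bV(χ)ᵀ = 0 for all χ ∈ ℝ^n. -/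
open Matrix Filter Topology Asymptotics

noncomputable section

/-! The Hamilton–Jacobi–Bellman equation determines `q` once `r` is chosen. With `r = R` constant,
`q = ¼ L_bV R⁻¹ L_bVᵀ - L_aV`, whose second-order expansion at the origin is `χᵀQχ` by the Riccati
equation; so `q > 0` near the origin, but possibly not elsewhere. Taking `r = m⁻¹ R` for a scalar
gain `m > 0` multiplies the first term by `m`. The gains making `q` positive at a given point form a
convex set, nonempty by the Artstein condition, so a partition of unity provides a continuous gain
which is `1` near the origin. -/

section QuadraticExpansion

variable {𝕜 E F G H : Type*} [NontriviallyNormedField 𝕜] [NormedAddCommGroup E] [NormedSpace 𝕜 E]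
  [NormedAddCommGroup F] [NormedSpace 𝕜 F] [NormedAddCommGroup G] [NormedSpace 𝕜 G]
  [NormedAddCommGroup H] [NormedSpace 𝕜 H]

theorem isLittleO_bilinear_sub_of_hasFDerivAt (Φ : F →L[𝕜] G →L[𝕜] H) {f : E → F} {g : E → G}
    {f' : E →L[𝕜] F} {g' : E →L[𝕜] G} {x : E} (hf : HasFDerivAt f f' x) (hg : HasFDerivAt g g' x)
    (hfx : f x = 0) (hgx : g x = 0) :
    (fun y => Φ (f y) (g y) - Φ (f' (y - x)) (g' (y - x))) =o[𝓝 x] fun y => ‖y - x‖ ^ 2 := by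
  have hf_sub : (fun y => f y - f' (y - x)) =o[𝓝 x] fun y => y - x := by
    simpa [hfx] using hf.isLittleO
  have hg_sub : (fun y => g y - g' (y - x)) =o[𝓝 x] fun y => y - x := by
    simpa [hgx] using hg.isLittleO
  have hg_bound : g =O[𝓝 x] fun y => y - x := by simpa [hgx] using hg.isBigO_sub
  have hf'_bound : (fun y => f' (y - x)) =O[𝓝 x] fun y => y - x := f'.isBigO_comp _ _
  have hΦ (u : E → F) (w : E → G) : (fun y => Φ (u y) (w y)) =O[𝓝 x] fun y => ‖u y‖ * ‖w y‖ :=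
    .of_bound ‖Φ‖ <| .of_forall fun y => by
      simpa [mul_assoc] using Φ.le_opNorm₂ (u y) (w y)
  have hleft := (hΦ _ _).trans_isLittleO (hf_sub.norm_norm.mul_isBigO hg_bound.norm_norm)
  have hright := (hΦ _ _).trans_isLittleO (hf'_bound.norm_norm.mul_isLittleO hg_sub.norm_norm)
  refine (hleft.add hright).congr (fun y => ?_) fun y => (sq _).symm
  simp only [map_sub, _root_.sub_apply]
  abel

theorem hasFDerivAt_clm_apply_of_eq_zero_s2 {f : E → F →L[𝕜] G} {f' : E →L[𝕜] F →L[𝕜] G} {g : E → F}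
    {x : E} (hf : HasFDerivAt f f' x) (hfx : f x = 0) (hg : ContinuousAt g x) :
    HasFDerivAt (fun y => f y (g y)) (f'.flip (g x)) x := by
  have hf_bound : f =O[𝓝 x] fun y => y - x := by simpa [hfx] using hf.isBigO_sub
  have hg_sub : (fun y => g y - g x) =o[𝓝 x] fun _ => (1 : ℝ) :=
    (isLittleO_one_iff ℝ).2 (tendsto_sub_nhds_zero_iff.2 hg)
  have happly : (fun y => f y (g y - g x)) =O[𝓝 x] fun y => ‖f y‖ * ‖g y - g x‖ :=
    .of_norm_le fun y => (f y).le_opNorm _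
  have hvar : (fun y => f y (g y - g x)) =o[𝓝 x] fun y => y - x :=
    (happly.trans_isLittleO
      (by simpa using hf_bound.norm_norm.mul_isLittleO hg_sub.norm_left)).of_norm_right
  have hconst : HasFDerivAt (fun y => f y (g x)) (f'.flip (g x)) x := by
    simpa using hf.clm_apply (hasFDerivAt_const (g x) x)
  refine .of_isLittleO ((hvar.add hconst.isLittleO).congr_left fun y => ?_)
  simp only [map_sub, hfx, _root_.zero_apply]
  abel

end QuadraticExpansion

section LowerBound

theorem exists_pos_mul_norm_sq_le_of_homogeneous {E : Type*} [NormedAddCommGroup E]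
    [NormedSpace ℝ E] [ProperSpace E] {f : E → ℝ} (hf : Continuous f)
    (hsmul : ∀ (c : ℝ) v, f (c • v) = c ^ 2 * f v) (hpos : ∀ v ≠ 0, 0 < f v) :
    ∃ c > 0, ∀ v, c * ‖v‖ ^ 2 ≤ f v := by
  obtain ⟨c, hc, hsphere⟩ := (isCompact_sphere (0 : E) 1).exists_forall_le' hf.continuousOn
    fun v hv => hpos v (ne_zero_of_mem_unit_sphere ⟨v, hv⟩)
  refine ⟨c, hc, fun v => ?_⟩
  obtain rfl | hv := eq_or_ne v 0
  · simpa using (hsmul 0 0).ge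
  have hunit : c ≤ f (‖v‖⁻¹ • v) := hsphere _ (by simp [norm_smul, hv])
  rwa [hsmul, inv_pow, inv_mul_eq_div, le_div_iff₀ (by positivity)] at hunit

theorem exists_pos_mul_norm_sq_le_of_posDef {ι : Type*} [Fintype ι] {Q : Matrix ι ι ℝ}
    (hQ : Q.PosDef) : ∃ c > 0, ∀ v, c * ‖v‖ ^ 2 ≤ v ⬝ᵥ Q *ᵥ v := by
  refine exists_pos_mul_norm_sq_le_of_homogeneous (by fun_prop) (fun c v => ?_) fun v hv => by
    simpa using hQ.dotProduct_mulVec_pos hv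
  simp only [mulVec_smul, smul_dotProduct, dotProduct_smul, smul_eq_mul]
  ring

theorem eventually_pos_of_isLittleO_sub {E : Type*} [NormedAddCommGroup E] {f g : E → ℝ} {c : ℝ}
    (hc : 0 < c) (hg : ∀ x, c * ‖x‖ ^ 2 ≤ g x)
    (hfg : (fun x => f x - g x) =o[𝓝 0] fun x => ‖x‖ ^ 2) :
    ∀ᶠ x in 𝓝[≠] 0, 0 < f x := by
  filter_upwards [nhdsWithin_le_nhds (hfg.bound (half_pos hc)), self_mem_nhdsWithin] with x hx hx0
  have hnorm : 0 < c * ‖x‖ ^ 2 := mul_pos hc (pow_pos (norm_pos_iff.2 hx0) 2)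
  rw [norm_pow, norm_norm, Real.norm_eq_abs] at hx
  linarith [(abs_le.1 hx).1, hg x]

end LowerBound

section Gain

variable {X : Type*} [TopologicalSpace X] [T2Space X] [ParacompactSpace X]

theorem exists_continuous_pos_lt_mul {s L : X → ℝ} (hs : Continuous s) (hL : Continuous L)
    (hs_nonneg : ∀ x, 0 ≤ s x) {x₀ : X} (hneg : ∀ x ≠ x₀, s x = 0 → L x < 0)
    (hlt : ∀ᶠ x in 𝓝[≠] x₀, L x < s x) :
    ∃ m : C(X, ℝ), (∀ x, 0 < m x) ∧ (∀ x ≠ x₀, L x < m x * s x) ∧ ∀ᶠ x in 𝓝 x₀, m x = 1 := by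
  obtain ⟨U, hU, hU_open, hx₀U⟩ := eventually_nhds_iff.1 (eventually_nhdsWithin_iff.1 hlt)
  obtain ⟨K, hK, hK_closed, hKU⟩ := exists_mem_nhds_isClosed_subset (hU_open.mem_nhds hx₀U)
  let admissible (x : X) : Set ℝ :=
    Set.Ioi 0 ∩ ((⋂ _ : x ≠ x₀, {m | L x < m * s x}) ∩ ⋂ _ : x ∈ K, {1})
  have hconvex (x : X) : Convex ℝ (admissible x) :=
    (convex_Ioi 0).inter <| .inter
      (convex_iInter fun _ => convex_halfSpace_gt (IsLinearMap.isLinearMap_smul' (s x)) _)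
      (convex_iInter fun _ => convex_singleton 1)
  have hlocal (x : X) : ∃ c, ∀ᶠ y in 𝓝 x, c ∈ admissible y := by
    by_cases hx : x ∈ U
    · refine ⟨1, ?_⟩
      filter_upwards [hU_open.mem_nhds hx] with y hy
      simpa [admissible] using hU y hy
    · obtain ⟨c, hc, hLc⟩ : ∃ c, 0 < c ∧ L x < c * s x := by
        obtain hsx | hsx := (hs_nonneg x).eq_or_lt
        · exact ⟨1, one_pos, by
            simpa [← hsx] using hneg x (ne_of_mem_of_not_mem hx₀U hx).symm hsx.symm⟩
        · refine ⟨(|L x| + 1) / s x, by positivity, ?_⟩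
          rw [div_mul_cancel₀ _ hsx.ne']
          linarith [le_abs_self (L x)]
      refine ⟨c, ?_⟩
      filter_upwards [hK_closed.isOpen_compl.mem_nhds fun hxK => hx (hKU hxK),
        hL.continuousAt.eventually_lt (hs.const_mul c).continuousAt hLc] with y hyK hy
      simp [admissible, hc, hy, show y ∉ K from hyK]
  obtain ⟨m, hm⟩ := exists_continuous_forall_mem_convex_of_local_const hconvex hlocal
  refine ⟨m, fun x => (hm x).1, fun x hx => Set.mem_iInter.1 (hm x).2.1 hx, ?_⟩
  filter_upwards [hK] with x hx
  exact Set.mem_iInter.1 (hm x).2.2 hx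

theorem exists_hjb_weights {ι : Type*} [Fintype ι] [DecidableEq ι] {L : X → ℝ} {β : X → ι → ℝ}
    (hL : Continuous L) (hβ : Continuous β) {R : Matrix ι ι ℝ} (hR : R.PosDef) {x₀ : X}
    (hneg : ∀ x ≠ x₀, β x = 0 → L x < 0)
    (hlt : ∀ᶠ x in 𝓝[≠] x₀, L x < 1 / 4 * (β x ⬝ᵥ R⁻¹ *ᵥ β x)) :
    ∃ (q : X → ℝ) (r : X → Matrix ι ι ℝ), Continuous q ∧ (∀ x ≠ x₀, 0 < q x) ∧ Continuous r ∧
      (∀ x, (r x).PosDef) ∧ q =ᶠ[𝓝 x₀] (fun x => 1 / 4 * (β x ⬝ᵥ R⁻¹ *ᵥ β x) - L x) ∧ r x₀ = R ∧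
      ∀ x, q x + L x - 1 / 4 * (β x ⬝ᵥ (r x)⁻¹ *ᵥ β x) = 0 := by
  set s : X → ℝ := fun x => 1 / 4 * (β x ⬝ᵥ R⁻¹ *ᵥ β x) with hs_def
  have hs : Continuous s := by fun_prop
  have hs_pos (x : X) (hx : β x ≠ 0) : 0 < s x := by
    have : 0 < β x ⬝ᵥ R⁻¹ *ᵥ β x := by simpa using hR.inv.dotProduct_mulVec_pos hx
    positivity
  have hs_nonneg (x : X) : 0 ≤ s x := by
    obtain hx | hx := eq_or_ne (β x) 0
    · simp [hs_def, hx]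
    · exact (hs_pos x hx).le
  obtain ⟨m, hm_pos, hm_lt, hm_one⟩ := exists_continuous_pos_lt_mul hs hL hs_nonneg
    (fun x hx hsx => hneg x hx (not_imp_comm.1 (hs_pos x) hsx.not_gt)) hlt
  have hinv (x : X) : ((m x)⁻¹ • R)⁻¹ = m x • R⁻¹ := by
    simpa [Units.smul_def] using
      Matrix.inv_smul' R (Units.mk0 (m x) (hm_pos x).ne')⁻¹ hR.det_pos.ne'.isUnit
  refine ⟨fun x => m x * s x - L x, fun x => (m x)⁻¹ • R, by fun_prop,
    fun x hx => sub_pos.2 (hm_lt x hx),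
    (m.continuous.inv₀ fun x => (hm_pos x).ne').smul continuous_const,
    fun x => hR.smul (inv_pos.2 (hm_pos x)), ?_, by simp [hm_one.self_of_nhds], fun x => ?_⟩
  · filter_upwards [hm_one] with x hx
    rw [hx, one_mul]
  · rw [hinv, smul_mulVec, dotProduct_smul, smul_eq_mul, hs_def]
    ring

end Gain

section LieDerivative

variable {E ι : Type*} [NormedAddCommGroup E] [NormedSpace ℝ E]

/-- The Lie derivative `L_f V = ∇V · f` of the function `V` along the vector field `f`. -/
def lieDeriv (V : E → ℝ) (f : E → E) (χ : E) : ℝ :=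
  fderiv ℝ V χ (f χ)

/-- The row vector `L_b V = ∇Vᵀ b` of Lie derivatives of `V` along the input vector fields. The
input matrix `b` is encoded as the family of its columns. -/
def inputLieDeriv (V : E → ℝ) (b : ι → E → E) (χ : E) : ι → ℝ :=
  fun i => lieDeriv V (b i) χ

variable {V : E → ℝ} {a : E → E} {b : ι → E → E} {D : E →L[ℝ] E →L[ℝ] ℝ} {A : E →L[ℝ] E} {x : E}

theorem lieDeriv_eq_zero (hV : fderiv ℝ V x = 0) : lieDeriv V a x = 0 := by
  simp [lieDeriv, hV]

theorem inputLieDeriv_eq_zero (hV : fderiv ℝ V x = 0) : inputLieDeriv V b x = 0 :=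
  funext fun _ => lieDeriv_eq_zero hV

theorem continuous_lieDeriv (hV : ContDiff ℝ 1 V) (ha : Continuous a) :
    Continuous (lieDeriv V a) :=
  (hV.continuous_fderiv one_ne_zero).clm_apply ha

theorem continuous_inputLieDeriv (hV : ContDiff ℝ 1 V) (hb : ∀ i, Continuous (b i)) :
    Continuous (inputLieDeriv V b) :=
  continuous_pi fun i => continuous_lieDeriv hV (hb i)

theorem isLittleO_lieDeriv_sub (hV : fderiv ℝ V x = 0) (hD : HasFDerivAt (fderiv ℝ V) D x)
    (ha : a x = 0) (hA : HasFDerivAt a A x) :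
    (fun χ => lieDeriv V a χ - D (χ - x) (A (χ - x))) =o[𝓝 x] fun χ => ‖χ - x‖ ^ 2 :=
  isLittleO_bilinear_sub_of_hasFDerivAt (.id ℝ (E →L[ℝ] ℝ)) hD hA hV ha

theorem hasFDerivAt_inputLieDeriv [Finite ι] (hV : fderiv ℝ V x = 0)
    (hD : HasFDerivAt (fderiv ℝ V) D x) (hb : ∀ i, ContinuousAt (b i) x) :
    HasFDerivAt (inputLieDeriv V b) (.pi fun i => D.flip (b i x)) x :=
  hasFDerivAt_pi.2 fun i => hasFDerivAt_clm_apply_of_eq_zero_s2 hD hV (hb i)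

variable [Fintype ι]

theorem isLittleO_inputLieDeriv_quadratic_sub (S : Matrix ι ι ℝ) (hV : fderiv ℝ V x = 0)
    (hD : HasFDerivAt (fderiv ℝ V) D x) (hb : ∀ i, ContinuousAt (b i) x) :
    (fun χ => inputLieDeriv V b χ ⬝ᵥ S *ᵥ inputLieDeriv V b χ
      - (fun i => D (χ - x) (b i x)) ⬝ᵥ S *ᵥ fun i => D (χ - x) (b i x))
      =o[𝓝 x] fun χ => ‖χ - x‖ ^ 2 := by
  classical
  have hβ := hasFDerivAt_inputLieDeriv hV hD hb
  have hβx := inputLieDeriv_eq_zero (b := b) hV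
  have hquad := isLittleO_bilinear_sub_of_hasFDerivAt
    (Matrix.toLinearMap₂' ℝ S).toContinuousBilinearMap hβ hβ hβx hβx
  simp only [LinearMap.toContinuousBilinearMap_apply, Matrix.toLinearMap₂'_apply'] at hquad
  exact hquad

/-- Here `D` is `2P` in the notation of the matrix Riccati equation, whence the factor `1 / 4`. The
state weight `Q` is a function on the state space, which `hRiccati` makes a quadratic form. -/
theorem stmt2_general [DecidableEq ι] {R : Matrix ι ι ℝ} {Q : E → ℝ} {c : ℝ}
    (ha : Continuous a) (ha0 : a 0 = 0) (hA : HasFDerivAt a A 0) (hb : ∀ i, Continuous (b i))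
    (hR : R.PosDef) (hc : 0 < c) (hQ : ∀ v, c * ‖v‖ ^ 2 ≤ Q v)
    (hV : ContDiff ℝ 1 V) (hV0 : fderiv ℝ V 0 = 0) (hD : HasFDerivAt (fderiv ℝ V) D 0)
    (hRiccati : ∀ v, D v (A v)
      - 1 / 4 * ((fun i => D v (b i 0)) ⬝ᵥ R⁻¹ *ᵥ fun i => D v (b i 0)) + Q v = 0)
    (hArtstein : ∀ χ ≠ 0, (∀ i, lieDeriv V (b i) χ = 0) → lieDeriv V a χ < 0) :
    ∃ (q : E → ℝ) (r : E → Matrix ι ι ℝ),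
      Continuous q ∧ (∀ χ, 0 ≤ q χ) ∧ (∀ χ ≠ 0, 0 < q χ) ∧
      Continuous r ∧ (∀ χ, (r χ).PosDef) ∧
      (fun χ => q χ - Q χ) =o[𝓝 0] (fun χ => ‖χ‖ ^ 2) ∧ r 0 = R ∧
      ∀ χ, q χ + lieDeriv V a χ
        - 1 / 4 * (inputLieDeriv V b χ ⬝ᵥ (r χ)⁻¹ *ᵥ inputLieDeriv V b χ) = 0 := by
  have hlocal : (fun χ => 1 / 4 * (inputLieDeriv V b χ ⬝ᵥ R⁻¹ *ᵥ inputLieDeriv V b χ)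
      - lieDeriv V a χ - Q χ) =o[𝓝 0] fun χ => ‖χ‖ ^ 2 := by
    have hquad := (isLittleO_inputLieDeriv_quadratic_sub R⁻¹ hV0 hD
      fun i => (hb i).continuousAt).const_mul_left (1 / 4)
    refine (hquad.sub (isLittleO_lieDeriv_sub hV0 hD ha0 hA)).congr (fun χ => ?_) fun χ => ?_
    · rw [sub_zero]
      linarith [hRiccati χ]
    · rw [sub_zero]
  have hlt := (eventually_pos_of_isLittleO_sub hc hQ hlocal).mono fun _ => sub_pos.1
  obtain ⟨q, r, hq, hq_pos, hr, hr_pos, hq_local, hr0, hHJB⟩ := exists_hjb_weights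
    (continuous_lieDeriv hV ha) (continuous_inputLieDeriv hV hb) hR
    (fun χ hχ hβ => hArtstein χ hχ (congrFun hβ)) hlt
  refine ⟨q, r, hq, fun χ => ?_, hq_pos, hr, hr_pos, ?_, hr0, hHJB⟩
  · obtain rfl | hχ := eq_or_ne χ 0
    · simp [hq_local.self_of_nhds, inputLieDeriv_eq_zero hV0, lieDeriv_eq_zero hV0]
    · exact (hq_pos χ hχ).le
  · exact hlocal.congr' (hq_local.symm.sub .rfl) .rfl

end LieDerivative

section Riccati

theorem IsPosDefFn.fderiv_zero {E : Type*} [NormedAddCommGroup E] [NormedSpace ℝ E] {V : E → ℝ}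
    (hV : IsPosDefFn V) : fderiv ℝ V 0 = 0 := by
  refine IsLocalMin.fderiv_eq_zero (.of_forall fun χ => ?_)
  obtain rfl | hχ := eq_or_ne χ 0
  · exact le_rfl
  · exact hV.1.trans_le (hV.2 χ hχ).le

theorem fderiv_fderiv_apply_eq_dotProduct_hessianAt {n : ℕ} (V : (Fin n → ℝ) → ℝ)
    (x v w : Fin n → ℝ) : fderiv ℝ (fderiv ℝ V) x v w = v ⬝ᵥ hessianAt V x *ᵥ w := by
  have hmatrix : hessianAt V x =
      LinearMap.toMatrix₂' ℝ (fderiv ℝ (fderiv ℝ V) x).toLinearMap₁₂ := by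
    ext i j
    simp [hessianAt, iteratedFDeriv_two_apply]
  rw [hmatrix, ← Matrix.toLinearMap₂'_apply', Matrix.toLinearMap₂'_toMatrix']
  rfl

theorem riccati_quadratic_eq_zero {α n m : Type*} [CommRing α] [Fintype n] [Fintype m]
    {P A Q : Matrix n n α} {B : Matrix n m α} {S : Matrix m m α} (hP : P.IsSymm)
    (hRiccati : P * A + Aᵀ * P - P * B * S * Bᵀ * P + Q = 0) (v : n → α) :
    2 * (v ⬝ᵥ P *ᵥ (A *ᵥ v)) - (v ᵥ* (P * B)) ⬝ᵥ S *ᵥ (v ᵥ* (P * B)) + v ⬝ᵥ Q *ᵥ v = 0 := by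
  have hdrift : v ⬝ᵥ (Aᵀ * P) *ᵥ v = v ⬝ᵥ (P * A) *ᵥ v := by
    rw [← dotProduct_transpose_mulVec, transpose_mul, transpose_transpose, hP.eq]
  have hinput : v ⬝ᵥ (P * B * S * Bᵀ * P) *ᵥ v =
      (v ᵥ* (P * B)) ⬝ᵥ S *ᵥ (v ᵥ* (P * B)) := by
    have hfactor : P * B * S * Bᵀ * P = P * B * (S * (P * B)ᵀ) := by
      simp only [transpose_mul, hP.eq, Matrix.mul_assoc]
    rw [hfactor, dotProduct_mulVec, ← vecMul_vecMul, ← dotProduct_mulVec, ← mulVec_mulVec,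
      mulVec_transpose]
  have hquad := congrArg (fun M => v ⬝ᵥ M *ᵥ v) hRiccati
  simp only [add_mulVec, sub_mulVec, dotProduct_add, dotProduct_sub, hdrift, hinput,
    zero_mulVec, dotProduct_zero] at hquad
  rw [mulVec_mulVec]
  linear_combination hquad

theorem riccati_fderiv_fderiv_eq_zero {n : ℕ} {m : Type*} [Fintype m] {V : (Fin n → ℝ) → ℝ}
    {x : Fin n → ℝ} {P A Q : Matrix (Fin n) (Fin n) ℝ} {B : Matrix (Fin n) m ℝ} {S : Matrix m m ℝ}
    (hPV : P = (1 / 2 : ℝ) • hessianAt V x) (hP : P.IsSymm)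
    (hRiccati : P * A + Aᵀ * P - P * B * S * Bᵀ * P + Q = 0) (v : Fin n → ℝ) :
    fderiv ℝ (fderiv ℝ V) x v (A *ᵥ v)
      - 1 / 4 * ((fun i => fderiv ℝ (fderiv ℝ V) x v fun k => B k i) ⬝ᵥ
          S *ᵥ fun i => fderiv ℝ (fderiv ℝ V) x v fun k => B k i) + v ⬝ᵥ Q *ᵥ v = 0 := by
  have hD (w : Fin n → ℝ) : fderiv ℝ (fderiv ℝ V) x v w = 2 * (v ⬝ᵥ P *ᵥ w) := by
    rw [fderiv_fderiv_apply_eq_dotProduct_hessianAt, hPV, smul_mulVec, dotProduct_smul, smul_eq_mul]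
    ring
  have hDB : (fun i => fderiv ℝ (fderiv ℝ V) x v fun k => B k i) = (2 : ℝ) • (v ᵥ* (P * B)) := by
    ext i
    rw [hD, dotProduct_mulVec, ← vecMul_vecMul]
    rfl
  rw [hDB, hD, mulVec_smul, smul_dotProduct, dotProduct_smul, smul_eq_mul, smul_eq_mul]
  linear_combination riccati_quadratic_eq_zero hP hRiccati v

end Riccati

/-- local optimality and global inverse optimality. If `V` is a `C²`
proper positive definite function whose half-Hessian `P := ½ H(V)(0)` at the origin is
positive definite and solves the algebraic Riccati equation
`PA + AᵀP − PBR⁻¹BᵀP + Q = 0`, and the Artstein condition holds, then there are a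
continuous state cost `q ≥ 0` (positive away from `0`, with quadratic approximation
`χᵀQχ` at `0`) and a continuous positive definite input-weight `r` with `r 0 = R`
such that `V` solves the corresponding Hamilton–Jacobi–Bellman equation. -/
theorem stmt2 {n p : ℕ}
    (a : (Fin n → ℝ) → (Fin n → ℝ)) (b : (Fin n → ℝ) → Fin n → Fin p → ℝ)
    (A : Matrix (Fin n) (Fin n) ℝ) (B : Matrix (Fin n) (Fin p) ℝ)
    (R : Matrix (Fin p) (Fin p) ℝ) (Q : Matrix (Fin n) (Fin n) ℝ)
    (ha : ContDiff ℝ 1 a) (ha0 : a 0 = 0)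
    (hA : ∀ v, fderiv ℝ a 0 v = A.mulVec v)
    (hb : ContDiff ℝ 1 b) (hB : B = Matrix.of (b 0))
    (hR : R.PosDef) (hQ : Q.PosDef)
    (V : (Fin n → ℝ) → ℝ)
    (hV : ContDiff ℝ 2 V) (hVnonneg : ∀ χ, 0 ≤ V χ)
    (hVproper : IsProper V) (hVpos : IsPosDefFn V)
    (hP : (((1:ℝ)/2) • hessianAt V 0).PosDef)
    (hRiccati : (((1:ℝ)/2) • hessianAt V 0) * A + Aᵀ * (((1:ℝ)/2) • hessianAt V 0)
        - (((1:ℝ)/2) • hessianAt V 0) * B * R⁻¹ * Bᵀ * (((1:ℝ)/2) • hessianAt V 0)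
        + Q = 0)
    (hArtstein : ∀ χ : Fin n → ℝ, χ ≠ 0 →
        (∀ i, fderiv ℝ V χ (fun k => b χ k i) = 0) → fderiv ℝ V χ (a χ) < 0) :
    ∃ (q : (Fin n → ℝ) → ℝ) (r : (Fin n → ℝ) → Fin p → Fin p → ℝ),
      Continuous q ∧ (∀ χ, 0 ≤ q χ) ∧ (∀ χ, χ ≠ 0 → 0 < q χ) ∧
      Continuous r ∧ (∀ χ, (Matrix.of (r χ)).PosDef) ∧
      -- `q(χ) = χᵀQχ + o(‖χ‖²)` as `χ → 0`
      (fun χ => q χ - χ ⬝ᵥ Q.mulVec χ) =o[nhds (0 : Fin n → ℝ)] (fun χ => ‖χ‖ ^ 2) ∧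
      Matrix.of (r 0) = R ∧
      -- Hamilton–Jacobi–Bellman equation
      (∀ χ : Fin n → ℝ,
        q χ + fderiv ℝ V χ (a χ)
          - (1/4) * ((fun i => fderiv ℝ V χ (fun k => b χ k i)) ⬝ᵥ
              ((Matrix.of (r χ))⁻¹).mulVec (fun i => fderiv ℝ V χ (fun k => b χ k i)))
          = 0) := by
  subst hB
  obtain ⟨c, hc, hQc⟩ := exists_pos_mul_norm_sq_le_of_posDef hQ
  have hDV := (hV.fderiv_right (m := 1) le_rfl).differentiable one_ne_zero 0
  exact stmt2_general (b := fun i χ k => b χ k i) ha.continuous ha0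
    (ha.differentiable one_ne_zero 0).hasFDerivAt
    (fun i => by have := hb.continuous; fun_prop) hR hc hQc
    (hV.of_le one_le_two) hVpos.fderiv_zero hDV.hasFDerivAt
    (fun v => (hA v).symm ▸ riccati_fderiv_fderiv_eq_zero rfl hP.isHermitian hRiccati v) hArtstein
end
end
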